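/- arXiv:2401.05729 — 10 statements merged into one kernel-verified Lean document; each statement's English description precedes it below -/
import Mathlib

section
/- Let T : ℝ⁶ → ℝ⁶ be the linear isomorphism T(x₁,x₂,x₃,y₁,y₂,y₃) = ((x₂+y₂)/2, (y₂−x₂)/2, x₁, x₃, y₁, −y₃). Then for all μ ∈ ℝ∖{0}, t,s ∈ ℝ∖{0} and u,v ∈ ℝ: (i) T∘(ρ(μI₂)⊕ρ(μI₂))∘T⁻¹ = μ²·I₆; (ii) T∘(ρ(diag(t,t⁻¹))⊕ρ(diag(s,s⁻¹)))∘T⁻¹ = diag(1,1,t²,t⁻²,s²,s⁻²); (iii) T∘(ρ(n_u)⊕ρ(n_v))∘T⁻¹ is the 6×6 matrix with rows (1,0,u,0,v,0), (0,1,−u,0,v,0), (0,0,1,0,0,0), (u,−u,u²,1,0,0), (0,0,0,0,1,0), (−v,−v,0,0,−v²,1). Moreover, each of these three matrices M satisfies Mᵀ J₃ M = λ J₃, where J₃ is the 6×6 block-diagonal matrix with three 2×2 blocks [[0,1],[1,0]], with λ = μ⁴ in case (i) and λ = 1 in cases (ii) and (iii). -/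
open Matrix

noncomputable section

/-- Action of the lower-triangular matrix `[[a,0],[c,d]]` on coefficients of binary
quadratic forms. -/
def rho (a c d : ℝ) : Matrix (Fin 3) (Fin 3) ℝ :=
  !![a^2, 0, 0; 2*a*c, a*d, 0; c^2, c*d, d^2]

/-- Direct sum of two `3×3` matrices as a `6×6` matrix. -/
def DS (A B : Matrix (Fin 3) (Fin 3) ℝ) : Matrix (Fin 6) (Fin 6) ℝ :=
  Matrix.reindex finSumFinEquiv finSumFinEquiv (Matrix.fromBlocks A 0 0 B)

/-- The change-of-coordinates `T(x₁,x₂,x₃,y₁,y₂,y₃) = ((x₂+y₂)/2, (y₂−x₂)/2, x₁, x₃, y₁, −y₃)`. -/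
def Tmat : Matrix (Fin 6) (Fin 6) ℝ :=
  !![0, 1/2, 0, 0, 1/2, 0;
     0, -(1/2), 0, 0, 1/2, 0;
     1, 0, 0, 0, 0, 0;
     0, 0, 1, 0, 0, 0;
     0, 0, 0, 1, 0, 0;
     0, 0, 0, 0, 0, -1]

/-- `J₃`: block diagonal with three blocks `[[0,1],[1,0]]`. -/
def J3mat : Matrix (Fin 6) (Fin 6) ℝ :=
  !![0,1,0,0,0,0;
     1,0,0,0,0,0;
     0,0,0,1,0,0;
     0,0,1,0,0,0;
     0,0,0,0,0,1;
     0,0,0,0,1,0]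

/-- The conjugated unipotent matrix. -/
def Muv (u v : ℝ) : Matrix (Fin 6) (Fin 6) ℝ :=
  !![1,0,u,0,v,0;
     0,1,-u,0,v,0;
     0,0,1,0,0,0;
     u,-u,u^2,1,0,0;
     0,0,0,0,1,0;
     -v,-v,0,0,-(v^2),1]

/-- Explicit inverse of `Tmat`. -/
def TinvAux : Matrix (Fin 6) (Fin 6) ℝ :=
  !![0, 0, 1, 0, 0, 0;
     1, -1, 0, 0, 0, 0;
     0, 0, 0, 1, 0, 0;
     0, 0, 0, 0, 1, 0;
     1, 1, 0, 0, 0, 0;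
     0, 0, 0, 0, 0, -1]

lemma Tmat_mul_aux : Tmat * TinvAux = 1 := by
  ext i j
  fin_cases i <;> fin_cases j <;>
    norm_num [Tmat, TinvAux, Matrix.mul_apply, Fin.sum_univ_succ, Matrix.one_apply, Fin.ext_iff]

lemma conj_aux {A M : Matrix (Fin 6) (Fin 6) ℝ} (h : Tmat * A = M * Tmat) :
    Tmat * A * Tmat⁻¹ = M := by
  rw [Matrix.inv_eq_right_inv Tmat_mul_aux, h, Matrix.mul_assoc, Tmat_mul_aux, Matrix.mul_one]

lemma DS_aux (a c d a' c' d' : ℝ) : DS (rho a c d) (rho a' c' d') =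
    !![a^2, 0, 0, 0, 0, 0;
       2*a*c, a*d, 0, 0, 0, 0;
       c^2, c*d, d^2, 0, 0, 0;
       0, 0, 0, a'^2, 0, 0;
       0, 0, 0, 2*a'*c', a'*d', 0;
       0, 0, 0, c'^2, c'*d', d'^2] := by
  ext i j
  fin_cases i <;> fin_cases j <;> rfl

lemma diag_aux (a b c d e f : ℝ) : Matrix.diagonal ![a, b, c, d, e, f] =
    !![a, 0, 0, 0, 0, 0;
       0, b, 0, 0, 0, 0;
       0, 0, c, 0, 0, 0;
       0, 0, 0, d, 0, 0;
       0, 0, 0, 0, e, 0;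
       0, 0, 0, 0, 0, f] := by
  ext i j
  fin_cases i <;> fin_cases j <;> simp [Matrix.diagonal_apply, Fin.ext_iff]

set_option maxHeartbeats 4000000 in
theorem stmt0 (μ t s : ℝ) (hμ : μ ≠ 0) (ht : t ≠ 0) (hs : s ≠ 0) (u v : ℝ) :
    Tmat * DS (rho μ 0 μ) (rho μ 0 μ) * Tmat⁻¹ = (μ^2) • (1 : Matrix (Fin 6) (Fin 6) ℝ) ∧
    Tmat * DS (rho t 0 t⁻¹) (rho s 0 s⁻¹) * Tmat⁻¹ =
      Matrix.diagonal ![1, 1, t^2, (t^2)⁻¹, s^2, (s^2)⁻¹] ∧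
    Tmat * DS (rho 1 u 1) (rho 1 v 1) * Tmat⁻¹ = Muv u v ∧
    ((μ^2) • (1 : Matrix (Fin 6) (Fin 6) ℝ))ᵀ * J3mat * ((μ^2) • (1 : Matrix (Fin 6) (Fin 6) ℝ))
      = (μ^4) • J3mat ∧
    (Matrix.diagonal ![1, 1, t^2, (t^2)⁻¹, s^2, (s^2)⁻¹])ᵀ * J3mat *
      Matrix.diagonal ![1, 1, t^2, (t^2)⁻¹, s^2, (s^2)⁻¹] = J3mat ∧
    (Muv u v)ᵀ * J3mat * (Muv u v) = J3mat := by
  refine ⟨conj_aux ?_, conj_aux ?_, conj_aux ?_, ?_, ?_, ?_⟩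
  · rw [DS_aux, smul_mul_assoc, Matrix.one_mul]
    ext i j
    fin_cases i <;> fin_cases j <;>
      simp [Tmat, Matrix.mul_apply, Fin.sum_univ_succ] <;> ring
  · rw [DS_aux, diag_aux]
    ext i j
    fin_cases i <;> fin_cases j <;>
      simp [Tmat, Matrix.mul_apply, Fin.sum_univ_succ, ht, hs]
  · rw [DS_aux]
    ext i j
    fin_cases i <;> fin_cases j <;>
      simp [Tmat, Muv, Matrix.mul_apply, Fin.sum_univ_succ] <;> ring
  · rw [Matrix.transpose_smul, Matrix.transpose_one, smul_mul_assoc, Matrix.one_mul,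
      mul_smul_comm, Matrix.mul_one, smul_smul]
    congr 1
    ring
  · rw [diag_aux]
    ext i j
    fin_cases i <;> fin_cases j <;>
      simp [J3mat, Matrix.mul_apply, Fin.sum_univ_succ, ht, hs]
  · ext i j
    fin_cases i <;> fin_cases j <;>
      simp [J3mat, Muv, Matrix.mul_apply, Fin.sum_univ_succ] <;> ring
end
end

section
/- Let n ≥ 1, let J be an invertible real symmetric n×n matrix, and set Q(x) = (1/2)xᵀJx. For x ∈ ℝⁿ let u(x) ∈ GL_{n+2}(ℝ) be the map (ξ, a, b) ↦ (ξ + a·Jx, a, −xᵀξ − Q(x)a + b). Then for every Schwartz function f on ℝⁿ×ℝ×ℝ and all (ξ,ξ₁,ξ₂), one has σ(u(x))f(ξ,ξ₁,ξ₂) = f(ξ + ξ₁·Jx, ξ₁, ξ₂) · e^{2πi ξ₂ (xᵀξ + Q(x)ξ₁)}. In particular (σ(u(x))f)(ξ,0,0) = f(ξ,0,0). -/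
open MeasureTheory Matrix

noncomputable section

/-- The additive character `e(x) = e^{2πix}`. -/
def e (x : ℝ) : ℂ := Complex.exp (2 * Real.pi * Complex.I * x)

/-- The partial Fourier transform `F₂` in the last variable:
`F₂f(ξ,u₁,u₂) = ∫ f(ξ,u₁,x) e^{2πi u₂ x} dx`. -/
def F2 {n : ℕ} (f : (Fin n → ℝ) × ℝ × ℝ → ℂ) : (Fin n → ℝ) × ℝ × ℝ → ℂ :=
  fun p => ∫ x : ℝ, f (p.1, p.2.1, x) * e (p.2.2 * x)

/-- The inverse partial Fourier transform:
`F₂⁻¹f(ξ,u₁,x) = ∫ f(ξ,u₁,u₂) e^{−2πi u₂ x} du₂`. -/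
def F2inv {n : ℕ} (f : (Fin n → ℝ) × ℝ × ℝ → ℂ) : (Fin n → ℝ) × ℝ × ℝ → ℂ :=
  fun p => ∫ u₂ : ℝ, f (p.1, p.2.1, u₂) * e (-(u₂ * p.2.2))

/-- `σ(g) = F₂ ∘ R(g) ∘ F₂⁻¹`, where `g` acts on `ℝⁿ×ℝ×ℝ` by the map `G`. -/
def sigmaOp {n : ℕ} (G : (Fin n → ℝ) × ℝ × ℝ → (Fin n → ℝ) × ℝ × ℝ)
    (f : (Fin n → ℝ) × ℝ × ℝ → ℂ) : (Fin n → ℝ) × ℝ × ℝ → ℂ :=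
  F2 (fun v => F2inv f (G v))

open scoped FourierTransform in
lemma slice_aux (g : SchwartzMap ℝ ℂ) (c u : ℝ) :
    ∫ y : ℝ, (∫ t : ℝ, g t * e (-(t * (-c + y)))) * e (u * y) = g u * e (u * c) := by
  have hF : ∀ w : ℝ, ∫ t : ℝ, g t * e (-(t * w)) = 𝓕 (g : ℝ → ℂ) w := by
    intro w
    rw [Real.fourier_real_eq_integral_exp_smul]
    congr 1
    ext t
    rw [smul_eq_mul, mul_comm, e]
    congr 2
    push_cast
    ring
  have hI : 𝓕⁻ (𝓕 (g : ℝ → ℂ)) u = g u := by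
    rw [g.continuous.fourierInv_fourier_eq g.integrable (𝓕 g).integrable]
  rw [Real.fourierInv_eq_fourier_neg, Real.fourier_real_eq_integral_exp_smul] at hI
  simp only [hF]
  rw [← hI, ← integral_mul_const,
    ← integral_add_left_eq_self (fun v : ℝ => _ * e (u * c)) (-c)]
  congr 1
  ext y
  rw [smul_eq_mul, mul_comm (Complex.exp _), mul_assoc]
  congr 1
  rw [e, e, ← Complex.exp_add]
  congr 1
  push_cast
  ring

lemma slice_temperate {n : ℕ} (a : Fin n → ℝ) (b : ℝ) :
    Function.HasTemperateGrowth (fun t : ℝ => ((a, b, t) : (Fin n → ℝ) × ℝ × ℝ)) := by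
  have h := (Function.HasTemperateGrowth.const (E := ℝ) ((a, b, 0) : (Fin n → ℝ) × ℝ × ℝ)).add
    ((ContinuousLinearMap.inr ℝ (Fin n → ℝ) (ℝ × ℝ)).comp
      (ContinuousLinearMap.inr ℝ ℝ ℝ)).hasTemperateGrowth
  convert h using 1
  ext t <;> simp

lemma slice_antilipschitz {n : ℕ} (a : Fin n → ℝ) (b : ℝ) :
    AntilipschitzWith 1 (fun t : ℝ => ((a, b, t) : (Fin n → ℝ) × ℝ × ℝ)) := by
  intro s t
  simp [Prod.edist_eq]

theorem stmt2 (n : ℕ) (hn : 1 ≤ n) (J : Matrix (Fin n) (Fin n) ℝ)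
    (hJsym : J.IsSymm) (hJ : IsUnit J.det) (x : Fin n → ℝ)
    (f : SchwartzMap ((Fin n → ℝ) × ℝ × ℝ) ℂ) (ξ : Fin n → ℝ) (ξ₁ ξ₂ : ℝ) :
    sigmaOp (fun p => (p.1 + p.2.1 • J.mulVec x, p.2.1,
        -(x ⬝ᵥ p.1) - (1/2 * (x ⬝ᵥ J.mulVec x)) * p.2.1 + p.2.2)) (⇑f) (ξ, ξ₁, ξ₂)
      = f (ξ + ξ₁ • J.mulVec x, ξ₁, ξ₂)
          * e (ξ₂ * (x ⬝ᵥ ξ + (1/2 * (x ⬝ᵥ J.mulVec x)) * ξ₁)) ∧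
    sigmaOp (fun p => (p.1 + p.2.1 • J.mulVec x, p.2.1,
        -(x ⬝ᵥ p.1) - (1/2 * (x ⬝ᵥ J.mulVec x)) * p.2.1 + p.2.2)) (⇑f) (ξ, 0, 0)
      = f (ξ, 0, 0) := by
  have main : ∀ ξ₁ ξ₂ : ℝ, sigmaOp (fun p => (p.1 + p.2.1 • J.mulVec x, p.2.1,
        -(x ⬝ᵥ p.1) - (1/2 * (x ⬝ᵥ J.mulVec x)) * p.2.1 + p.2.2)) (⇑f) (ξ, ξ₁, ξ₂)
      = f (ξ + ξ₁ • J.mulVec x, ξ₁, ξ₂)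
          * e (ξ₂ * (x ⬝ᵥ ξ + (1/2 * (x ⬝ᵥ J.mulVec x)) * ξ₁)) := by
    intro ξ₁ ξ₂
    have h := slice_aux (SchwartzMap.compCLMOfAntilipschitz ℝ
      (slice_temperate (ξ + ξ₁ • J.mulVec x) ξ₁) (slice_antilipschitz _ _) f)
      (x ⬝ᵥ ξ + (1/2 * (x ⬝ᵥ J.mulVec x)) * ξ₁) ξ₂
    simp only [SchwartzMap.compCLMOfAntilipschitz_apply, Function.comp_apply, neg_add'] at h
    exact h
  refine ⟨main ξ₁ ξ₂, ?_⟩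
  rw [main 0 0]
  simp [e]
end
end

section
/- Let m ≥ 2, let h ∈ GL_m(ℝ) and λ ∈ ℝ∖{0}. For a Schwartz function f on ℝᵐ×ℝ×ℝ define σ'(h)f(ζ,a,b) := f(hζ, λa, b). Write ℝᵐ = ℝ^{m−2}×ℝ×ℝ and define d(f) on ℝ^{m−2}×ℝ×ℝ by d(f)(ζ,u₁,u₂) := ∫_ℝ f(ζ,u₁,x,0,0) e^{2πi u₂ x} dx (restriction of f to ℝᵐ×{(0,0)} followed by partial Fourier transform in the last ℝᵐ-coordinate). Let σ(h) := F₂ ∘ R(h) ∘ F₂⁻¹ act on Schwartz functions on ℝ^{m−2}×ℝ×ℝ, where R(h)φ(ζ,a,x) := φ(h·(ζ,a,x)) views (ζ,a,x) ∈ ℝᵐ. Then d(σ'(h)f) = σ(h)(d(f)). -/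
open MeasureTheory Matrix

noncomputable section

/-- Embedding `ℝⁿ×ℝ×ℝ ≅ ℝ^{n+2}` (the last two coordinates are appended). -/
def embV (n : ℕ) (p : (Fin n → ℝ) × ℝ × ℝ) : Fin (n+2) → ℝ :=
  Fin.append p.1 ![p.2.1, p.2.2]

/-- The inverse identification `ℝ^{n+2} ≅ ℝⁿ×ℝ×ℝ`. -/
def splitV (n : ℕ) (v : Fin (n+2) → ℝ) : (Fin n → ℝ) × ℝ × ℝ :=
  (fun i => v (Fin.castAdd 2 i), v (Fin.natAdd n 0), v (Fin.natAdd n 1))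

/-- `d(f)(ζ,u₁,u₂) = ∫ f(ζ,u₁,x,0,0) e^{2πi u₂ x} dx` : restriction to `ℝᵐ×{(0,0)}`
followed by the partial Fourier transform in the last `ℝᵐ`-coordinate (`m = n+2`). -/
def dmap (n : ℕ) (f : (Fin (n+2) → ℝ) × ℝ × ℝ → ℂ) : (Fin n → ℝ) × ℝ × ℝ → ℂ :=
  fun p => ∫ x : ℝ, f (embV n (p.1, p.2.1, x), (0:ℝ), (0:ℝ)) * e (p.2.2 * x)

lemma embV_affine (n : ℕ) (a : Fin n → ℝ) (b x : ℝ) :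
    embV n (a, b, x) = embV n (a, b, 0) + x • embV n (0, 0, 1) := by
  funext i
  refine Fin.addCases (fun j => ?_) (fun j => ?_) i
  · simp [embV]
  · fin_cases j <;> simp [embV, Fin.append_right]

lemma embV_last (n : ℕ) (a : Fin n → ℝ) (b x : ℝ) :
    embV n (a, b, x) (Fin.natAdd n 1) = x := by
  simp [embV, Fin.append_right]

lemma embV_splitV (n : ℕ) (v : Fin (n+2) → ℝ) : embV n (splitV n v) = v := by
  funext i
  refine Fin.addCases (fun j => ?_) (fun j => ?_) i
  · simp [embV, splitV]
  · fin_cases j <;> simp [embV, splitV, Fin.append_right]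

lemma embV_growth (n : ℕ) (a : Fin n → ℝ) (b : ℝ) :
    Function.HasTemperateGrowth
      (fun x : ℝ => ((embV n (a, b, x), (0:ℝ), (0:ℝ)) : (Fin (n+2) → ℝ) × ℝ × ℝ)) := by
  have h1 := (Function.HasTemperateGrowth.const (E := ℝ)
    ((embV n (a, b, 0), (0:ℝ), (0:ℝ)) : (Fin (n+2) → ℝ) × ℝ × ℝ)).add
    (ContinuousLinearMap.toSpanSingleton ℝ
      ((embV n (0, 0, 1), (0:ℝ), (0:ℝ)) : (Fin (n+2) → ℝ) × ℝ × ℝ)).hasTemperateGrowth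
  convert h1 using 1
  funext x
  rw [embV_affine]
  simp [ContinuousLinearMap.toSpanSingleton_apply]

lemma embV_upper (n : ℕ) (a : Fin n → ℝ) (b : ℝ) :
    ∃ (k : ℕ) (C : ℝ), ∀ x : ℝ, ‖x‖ ≤ C * (1 +
      ‖((embV n (a, b, x), (0:ℝ), (0:ℝ)) : (Fin (n+2) → ℝ) × ℝ × ℝ)‖) ^ k := by
  refine ⟨1, 1, fun x => ?_⟩
  have h1 := norm_le_pi_norm (embV n (a, b, x)) (Fin.natAdd n 1)
  rw [embV_last] at h1
  have h2 := norm_fst_le ((embV n (a, b, x), (0:ℝ), (0:ℝ)) : (Fin (n+2) → ℝ) × ℝ × ℝ)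
  simp only at h2
  linarith

open FourierTransform in
lemma F2inv_dmap (n : ℕ) (f : SchwartzMap ((Fin (n+2) → ℝ) × ℝ × ℝ) ℂ)
    (p : (Fin n → ℝ) × ℝ × ℝ) :
    F2inv (dmap n (⇑f)) p = f (embV n p, 0, 0) := by
  obtain ⟨a, b, x⟩ := p
  let g : SchwartzMap ℝ ℂ :=
    SchwartzMap.compCLM ℝ (embV_growth n a b) (embV_upper n a b) f
  have hg : ∀ y, g y = f (embV n (a, b, y), 0, 0) := fun y => rfl
  have h1 : ∀ u, dmap n (⇑f) (a, b, u) = (𝓕⁻ g) u := by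
    intro u
    rw [SchwartzMap.fourierInv_coe, Real.fourierInv_eq']
    simp only [dmap, e, ← hg, smul_eq_mul]
    congr 1
    funext y
    rw [mul_comm]
    congr 2
    simp
    ring
  have h2 : (𝓕 (𝓕⁻ g)) x = g x := by rw [FourierTransform.fourier_fourierInv_eq]
  rw [← hg, ← h2, SchwartzMap.fourier_coe, Real.fourier_eq']
  simp only [F2inv, h1, e, smul_eq_mul]
  congr 1
  funext y
  rw [mul_comm]
  congr 2
  simp
  ring

theorem stmt6 (n : ℕ) (h : Matrix (Fin (n+2)) (Fin (n+2)) ℝ) (hh : IsUnit h.det)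
    (lam : ℝ) (hlam : lam ≠ 0) (f : SchwartzMap ((Fin (n+2) → ℝ) × ℝ × ℝ) ℂ) :
    dmap n (fun q => f (h.mulVec q.1, lam * q.2.1, q.2.2))
      = sigmaOp (fun p => splitV n (h.mulVec (embV n p))) (dmap n (⇑f)) := by
  funext p
  simp only [sigmaOp, F2, F2inv_dmap, embV_splitV, dmap, mul_zero]
end
end

section
/- Let d and m be positive integers with d dividing m, and let D be an integer with d² dividing D. Then A(4m/d, D/d²) ≤ A(4m, D). -/
/-- `A m n` is the number of residue classes `x` modulo `m` with `x² ≡ n (mod m)`. -/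
noncomputable def A (m : ℕ) (n : ℤ) : ℕ := Nat.card {x : ZMod m // x ^ 2 = (n : ZMod m)}

theorem stmt8 (d m : ℕ) (hd : 0 < d) (hm : 0 < m) (hdm : d ∣ m) (D : ℤ)
    (hdD : (d : ℤ) ^ 2 ∣ D) :
    A (4 * m / d) (D / (d : ℤ) ^ 2) ≤ A (4 * m) D := by
  obtain ⟨k, rfl⟩ := hdm
  obtain ⟨n, rfl⟩ := hdD
  have hd0 : (d : ℤ) ≠ 0 := by exact_mod_cast hd.ne'
  have h1 : 4 * (d * k) / d = 4 * k := by
    rw [show 4 * (d * k) = d * (4 * k) by ring]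
    exact Nat.mul_div_cancel_left _ hd
  have hk : 0 < k := Nat.pos_of_mul_pos_left hm
  rw [h1, Int.mul_ediv_cancel_left _ (pow_ne_zero 2 hd0)]
  unfold A
  haveI : NeZero (4 * k) := ⟨by omega⟩
  haveI : NeZero (4 * (d * k)) := ⟨by omega⟩
  have key : ∀ x : ZMod (4 * k), x ^ 2 = (n : ZMod (4 * k)) →
      (((d : ℤ) * (x.val : ℤ) : ℤ) : ZMod (4 * (d * k))) ^ 2
        = (((d : ℤ) ^ 2 * n : ℤ) : ZMod (4 * (d * k))) := by
    intro x hx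
    have h2 : (((x.val : ℤ) ^ 2 : ℤ) : ZMod (4 * k)) = ((n : ℤ) : ZMod (4 * k)) := by
      rw [← hx]; simp
    rw [ZMod.intCast_eq_intCast_iff_dvd_sub] at h2
    rw [← Int.cast_pow, ZMod.intCast_eq_intCast_iff_dvd_sub]
    obtain ⟨c, hc⟩ := h2
    refine ⟨d * c, ?_⟩
    push_cast at hc ⊢
    linear_combination (d : ℤ) ^ 2 * hc
  refine Nat.card_le_card_of_injective (fun x => ⟨_, key x.1 x.2⟩) ?_
  rintro ⟨x, hx⟩ ⟨y, hy⟩ h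
  simp only [Subtype.mk.injEq] at h ⊢
  rw [ZMod.intCast_eq_intCast_iff_dvd_sub] at h
  obtain ⟨c, hc⟩ := h
  have h3 : ((x.val : ℤ) : ZMod (4 * k)) = ((y.val : ℤ) : ZMod (4 * k)) := by
    rw [ZMod.intCast_eq_intCast_iff_dvd_sub]
    refine ⟨c, mul_left_cancel₀ hd0 ?_⟩
    push_cast at hc ⊢
    linear_combination hc
  simpa using h3
end

section
/- Let m, n be positive integers and let D be a nonzero integer. Then ∑_{d ≥ 1, d²∣D, d∣m, d∣n} d · A(4m/d, D/d²) · A(4n/d, D/d²) ≤ σ₁(|D|) · A(4m, D) · A(4n, D), where σ₁(|D|) denotes the sum of the positive divisors of |D|, and the sum on the left runs over positive integers d such that d² divides D, d divides m and d divides n. -/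
lemma A_le (d k : ℕ) (hd : 0 < d) (hk : 0 < k) (E : ℤ) : A k E ≤ A (d * k) ((d : ℤ) ^ 2 * E) := by
  haveI : NeZero k := ⟨hk.ne'⟩
  haveI : NeZero (d * k) := ⟨(Nat.mul_pos hd hk).ne'⟩
  unfold A
  have key : ∀ y : {x : ZMod k // x ^ 2 = (E : ZMod k)},
      ((d * y.1.val : ℕ) : ZMod (d * k)) ^ 2 = (((d : ℤ) ^ 2 * E : ℤ) : ZMod (d * k)) := by
    rintro ⟨y, hy⟩
    have h1 : (((y.val : ℤ) ^ 2 : ℤ) : ZMod k) = (E : ZMod k) := by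
      push_cast
      rw [ZMod.natCast_zmod_val]
      exact hy
    rw [ZMod.intCast_eq_intCast_iff_dvd_sub] at h1
    have h2 : ((((d : ℤ) * (y.val : ℤ)) ^ 2 : ℤ) : ZMod (d * k))
        = (((d : ℤ) ^ 2 * E : ℤ) : ZMod (d * k)) := by
      rw [ZMod.intCast_eq_intCast_iff_dvd_sub]
      obtain ⟨c, hc⟩ := h1
      refine ⟨d * c, ?_⟩
      push_cast
      linear_combination (d : ℤ) ^ 2 * hc
    rw [← h2]
    push_cast
    rfl
  refine Nat.card_le_card_of_injective
    (fun y => (⟨((d * y.1.val : ℕ) : ZMod (d * k)), key y⟩ :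
      {x : ZMod (d * k) // x ^ 2 = (((d : ℤ) ^ 2 * E : ℤ) : ZMod (d * k))})) ?_
  rintro ⟨y, hy⟩ ⟨z, hz⟩ h
  have h := congrArg Subtype.val h
  simp only at h
  rw [ZMod.natCast_eq_natCast_iff] at h
  have h' := Nat.ModEq.mul_left_cancel' hd.ne' h
  rw [← ZMod.natCast_eq_natCast_iff, ZMod.natCast_zmod_val, ZMod.natCast_zmod_val] at h'
  exact Subtype.ext h'

lemma A_le' (m d : ℕ) (hm : 0 < m) (hdm : d ∣ m) (D : ℤ) (hdD : (d : ℤ) ^ 2 ∣ D) :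
    A (4 * m / d) (D / (d : ℤ) ^ 2) ≤ A (4 * m) D := by
  have hd : 0 < d := Nat.pos_of_dvd_of_pos hdm hm
  have h4 : d ∣ 4 * m := hdm.mul_left 4
  have h := A_le d (4 * m / d) hd (Nat.div_pos (Nat.le_of_dvd (by omega) h4) hd) (D / (d : ℤ) ^ 2)
  rwa [Nat.mul_div_cancel' h4, Int.mul_ediv_cancel' hdD] at h

theorem stmt10 (m n : ℕ) (hm : 0 < m) (hn : 0 < n) (D : ℤ) (hD : D ≠ 0) :
    ∑ d ∈ m.divisors.filter (fun d : ℕ => (d : ℤ) ^ 2 ∣ D ∧ d ∣ n),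
        d * A (4 * m / d) (D / (d : ℤ) ^ 2) * A (4 * n / d) (D / (d : ℤ) ^ 2)
      ≤ (∑ d ∈ D.natAbs.divisors, d) * A (4 * m) D * A (4 * n) D := by
  rw [Finset.sum_mul, Finset.sum_mul]
  refine le_trans (Finset.sum_le_sum (g := fun d => d * A (4 * m) D * A (4 * n) D) ?_)
    (Finset.sum_le_sum_of_subset ?_)
  · intro d hd
    simp only [Finset.mem_filter, Nat.mem_divisors] at hd
    exact Nat.mul_le_mul (Nat.mul_le_mul le_rfl (A_le' m d hm hd.1.1 D hd.2.1))
      (A_le' n d hn hd.2.2 D hd.2.1)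
  · intro d hd
    simp only [Finset.mem_filter, Nat.mem_divisors] at hd
    rw [Nat.mem_divisors]
    exact ⟨Int.natCast_dvd.mp ((dvd_pow_self _ two_ne_zero).trans hd.2.1), Int.natAbs_ne_zero.mpr hD⟩
end

section
/- Let σ₁, σ₂, σ₃ be real numbers with σ₁ > 1, σ₂ > 1 and σ₃ > 3, and let ε ∈ {+1, −1}. Then the triple series ∑_{D=1}^{∞} ∑_{m=1}^{∞} ∑_{n=1}^{∞} ( ∑_{d ≥ 1, d²∣D, d∣m, d∣n} d · A(4m/d, εD/d²) · A(4n/d, εD/d²) ) / ( m^{σ₁} n^{σ₂} D^{σ₃} ) converges; that is, the multiple Dirichlet series ξ₊(s₁,s₂,w) and ξ₋(s₁,s₂,w) converge absolutely in the region Re(s₁) > 1, Re(s₂) > 1, Re(w) > 3. -/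
lemma fiber_card (M : ℕ) (hM : 0 < M) (N : ℤ) (hN : N ≠ 0) (x0 : ℤ) (h0 : (M : ℤ) ∣ x0 ^ 2 - N)
    (e f : ℕ) (hef : M = e * f) (F : Finset ℕ)
    (hF : ∀ x ∈ F, x < M ∧ (e : ℤ) ∣ x - x0 ∧ (f : ℤ) ∣ x + x0) :
    F.card ≤ 2 * N.natAbs := by
  rcases F.eq_empty_or_nonempty with rfl | ⟨x, hx⟩
  · simp
  have hgl : Nat.lcm e f * Nat.gcd e f = M := by rw [mul_comm, Nat.gcd_mul_lcm, hef]
  have hL : 0 < Nat.lcm e f := Nat.pos_of_ne_zero (by rintro h; rw [h] at hgl; omega)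
  have hg1 : F.card ≤ Nat.gcd e f := by
    rw [← Finset.card_range (Nat.gcd e f)]
    refine Finset.card_le_card_of_injOn (fun x => x / Nat.lcm e f) ?_ ?_
    · intro y hy
      have := (hF y hy).1
      simp only [Finset.coe_range, Set.mem_Iio]
      rw [Nat.div_lt_iff_lt_mul hL, mul_comm, hgl]; exact this
    · intro y hy z hz hyz
      have hy' := hF y hy
      have hz' := hF z hz
      have h1 : (e : ℤ) ∣ z - y := by
        have := dvd_sub hz'.2.1 hy'.2.1; simpa using this
      have h2 : (f : ℤ) ∣ z - y := by
        have := dvd_sub hz'.2.2 hy'.2.2; simpa using this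
      have e1 : y ≡ z [MOD e] := (Nat.modEq_iff_dvd).2 h1
      have e2 : y ≡ z [MOD f] := (Nat.modEq_iff_dvd).2 h2
      have e3 : y ≡ z [MOD Nat.lcm e f] := by
        rw [Nat.modEq_iff_dvd]
        have := Int.coe_lcm_dvd h1 h2
        simpa [Int.lcm] using this
      simp only at hyz
      rw [← Nat.div_add_mod y (Nat.lcm e f), ← Nat.div_add_mod z (Nat.lcm e f), hyz]
      congr 1
  have hx' := hF x hx
  have ge : ((Nat.gcd e f : ℕ) : ℤ) ∣ e := by exact_mod_cast Nat.gcd_dvd_left e f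
  have gf : ((Nat.gcd e f : ℕ) : ℤ) ∣ f := by exact_mod_cast Nat.gcd_dvd_right e f
  set g := Nat.gcd e f with hg
  have k1 : (g : ℤ) ∣ 2 * x0 := by
    have := dvd_sub (gf.trans hx'.2.2) (ge.trans hx'.2.1)
    have h : (x : ℤ) + x0 - (x - x0) = 2 * x0 := by ring
    rwa [h] at this
  have k2 : (g : ℤ) ^ 2 ∣ 4 * x0 ^ 2 := by
    have := pow_dvd_pow_of_dvd k1 2
    have h : (2 * x0) ^ 2 = 4 * x0 ^ 2 := by ring
    rwa [h] at this
  have k3 : (g : ℤ) ^ 2 ∣ M := by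
    rw [hef, sq]; push_cast; exact mul_dvd_mul ge gf
  have k4 : (g : ℤ) ^ 2 ∣ 4 * N := by
    have := dvd_sub k2 ((k3.trans h0).mul_left 4)
    have h : 4 * x0 ^ 2 - 4 * (x0 ^ 2 - N) = 4 * N := by ring
    rwa [h] at this
  have k5 : g ^ 2 ≤ 4 * N.natAbs := by
    have := Int.natAbs_dvd_natAbs.2 k4
    simp only [Int.natAbs_pow, Int.natAbs_natCast, Int.natAbs_mul] at this
    exact Nat.le_of_dvd (by have := Int.natAbs_pos.2 hN; simp; omega) this
  have : 1 ≤ N.natAbs := Int.natAbs_pos.2 hN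
  nlinarith

lemma A_le_s11 (M : ℕ) (hM : 0 < M) (N : ℤ) (hN : N ≠ 0) :
    A M N ≤ 2 * N.natAbs * M.divisors.card := by
  have : NeZero M := ⟨hM.ne'⟩
  classical
  unfold A
  rw [Nat.card_eq_fintype_card, Fintype.card_subtype]
  set T : Finset (ZMod M) := Finset.univ.filter (fun x => x ^ 2 = (N : ZMod M)) with hT
  have hTd : ∀ x ∈ T, (M : ℤ) ∣ (x.val : ℤ) ^ 2 - N := by
    intro x hx
    rw [← ZMod.intCast_eq_intCast_iff_dvd_sub]
    have : x ^ 2 = (N : ZMod M) := by simpa [hT] using hx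
    simp [this]
  rcases T.eq_empty_or_nonempty with h | ⟨x0, hx0⟩
  · rw [h]; simp
  refine Finset.card_le_mul_card_image_of_maps_to
    (f := fun x : ZMod M => Nat.gcd M ((x.val : ℤ) - x0.val).natAbs) ?_ _ ?_
  · intro x hx
    simp only [Nat.mem_divisors]
    exact ⟨Nat.gcd_dvd_left _ _, hM.ne'⟩
  · intro e he
    have hed := Nat.dvd_of_mem_divisors he
    obtain ⟨f, hf⟩ := hed
    rw [← Finset.card_image_of_injective _ (ZMod.val_injective M)]
    refine fiber_card M hM N hN x0.val (hTd x0 hx0) e f hf _ ?_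
    intro x hx
    simp only [Finset.mem_image, Finset.mem_filter] at hx
    obtain ⟨y, ⟨hyT, hye⟩, rfl⟩ := hx
    refine ⟨ZMod.val_lt y, ?_, ?_⟩
    · rw [Int.natCast_dvd, ← hye]; exact Nat.gcd_dvd_right _ _
    · have h1 : (M : ℤ) ∣ ((y.val : ℤ) - x0.val) * (y.val + x0.val) := by
        have := dvd_sub (hTd y hyT) (hTd x0 hx0)
        have h : (y.val : ℤ) ^ 2 - N - ((x0.val : ℤ) ^ 2 - N) =
            ((y.val : ℤ) - x0.val) * (y.val + x0.val) := by ring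
        rwa [h] at this
      rw [Int.natCast_dvd, Int.natAbs_mul] at h1
      have h2 := Nat.dvd_gcd_mul_iff_dvd_mul.2 h1
      rw [hye] at h2
      conv_lhs at h2 => rw [hf]
      have he0 : 0 < e := Nat.pos_of_mem_divisors he
      rw [Int.natCast_dvd]
      exact Nat.dvd_of_mul_dvd_mul_left he0 h2

lemma summable_tau (σ : ℝ) (h : 1 < σ) :
    Summable (fun m : ℕ => ((4 * (m + 1)).divisors.card : ℝ) / ((m : ℝ) + 1) ^ σ) := by
  have hz : LSeriesSummable (fun n => ((ArithmeticFunction.zeta : ArithmeticFunction ℂ) n)) (σ : ℂ) := by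
    have := (ArithmeticFunction.LSeriesSummable_zeta_iff (s := (σ : ℂ))).2 (by simpa using h)
    simpa using this
  have h2 := ArithmeticFunction.LSeriesSummable_mul hz hz
  have h3 : Summable (fun n : ℕ => (n.divisors.card : ℝ) / (n : ℝ) ^ σ) := by
    refine (h2.norm).congr ?_
    intro n
    rcases eq_or_ne n 0 with rfl | hn
    · simp
    rw [LSeries.term_of_ne_zero hn, norm_div, Complex.norm_natCast_cpow_of_pos (Nat.pos_of_ne_zero hn)]
    have : ((ArithmeticFunction.zeta : ArithmeticFunction ℂ) * (ArithmeticFunction.zeta : ArithmeticFunction ℂ)) n = (n.divisors.card : ℂ) := by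
      rw [ArithmeticFunction.coe_zeta_mul_apply]
      rw [Finset.sum_congr rfl (g := fun _ => (1 : ℂ))]
      · simp
      · intro i hi
        simp [(Nat.pos_of_mem_divisors hi).ne']
    rw [this]; simp
  have hinj : Function.Injective (fun m : ℕ => 4 * (m + 1)) := by
    intro a b hab
    simp only at hab; omega
  refine ((h3.comp_injective hinj).mul_left ((4 : ℝ) ^ σ)).congr ?_
  intro m
  simp only [Function.comp]
  push_cast
  rw [Real.mul_rpow (by norm_num) (by positivity)]
  have : (4 : ℝ) ^ σ ≠ 0 := by positivity
  field_simp

lemma term_le (ε : ℤ) (hε : ε = 1 ∨ ε = -1) (D m n d : ℕ) (hD : 0 < D) (hm : 0 < m) (hn : 0 < n)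
    (hdD : (d : ℤ) ^ 2 ∣ (D : ℤ)) (hdm : d ∣ m) (hdn : d ∣ n) :
    (d : ℝ) * (A (4 * m / d) (ε * (D : ℤ) / (d : ℤ) ^ 2) : ℝ)
            * (A (4 * n / d) (ε * (D : ℤ) / (d : ℤ) ^ 2) : ℝ) ≤
    4 * (D : ℝ) ^ 2 * (4 * m).divisors.card * (4 * n).divisors.card * (1 / (d : ℝ) ^ 3) := by
  have hd : 0 < d := Nat.pos_of_dvd_of_pos hdm hm
  obtain ⟨q, hq⟩ : d ^ 2 ∣ D := by exact_mod_cast hdD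
  have hq0 : q ≠ 0 := by rintro rfl; omega
  have hN : ε * (D : ℤ) / (d : ℤ) ^ 2 = ε * q := by
    rw [hq]; push_cast
    rw [show ε * ((d : ℤ) ^ 2 * q) = (d : ℤ) ^ 2 * (ε * q) by ring]
    exact Int.mul_ediv_cancel_left _ (by positivity)
  have hab : (ε * (q : ℤ)).natAbs = q := by rcases hε with rfl | rfl <;> simp
  have hne : ε * (q : ℤ) ≠ 0 := by rw [← Int.natAbs_ne_zero, hab]; exact hq0
  have key : ∀ k : ℕ, 0 < k → d ∣ k →
      (A (4 * k / d) (ε * q) : ℝ) ≤ 2 * q * (4 * k).divisors.card := by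
    intro k hk hdk
    have hdk' : d ∣ 4 * k := hdk.mul_left 4
    have hpos : 0 < 4 * k / d := Nat.div_pos (Nat.le_of_dvd (by omega) hdk') hd
    have h1 := A_le_s11 (4 * k / d) hpos (ε * q) hne
    rw [hab] at h1
    have h2 : (4 * k / d).divisors.card ≤ (4 * k).divisors.card :=
      Finset.card_le_card (Nat.divisors_subset_of_dvd (by omega) (Nat.div_dvd_of_dvd hdk'))
    have h3 := h1.trans (Nat.mul_le_mul_left _ h2)
    exact_mod_cast h3
  rw [hN]
  have hdr : (0 : ℝ) < d := by exact_mod_cast hd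
  calc _ ≤ (d : ℝ) * (2 * q * (4 * m).divisors.card) * (2 * q * (4 * n).divisors.card) := by
        gcongr
        · exact key m hm hdm
        · exact key n hn hdn
    _ = _ := by
        rw [hq]; push_cast
        field_simp
        ring

theorem stmt11 (σ₁ σ₂ σ₃ : ℝ) (h1 : 1 < σ₁) (h2 : 1 < σ₂) (h3 : 3 < σ₃)
    (ε : ℤ) (hε : ε = 1 ∨ ε = -1) :
    Summable (fun p : ℕ × ℕ × ℕ =>
      (∑ d ∈ (p.2.1 + 1).divisors.filter
            (fun d : ℕ => (d : ℤ) ^ 2 ∣ ((p.1 : ℤ) + 1) ∧ d ∣ (p.2.2 + 1)),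
          (d : ℝ) * (A (4 * (p.2.1 + 1) / d) (ε * ((p.1 : ℤ) + 1) / (d : ℤ) ^ 2) : ℝ)
            * (A (4 * (p.2.2 + 1) / d) (ε * ((p.1 : ℤ) + 1) / (d : ℤ) ^ 2) : ℝ)) /
        (((p.2.1 : ℝ) + 1) ^ σ₁ * ((p.2.2 : ℝ) + 1) ^ σ₂ * ((p.1 : ℝ) + 1) ^ σ₃)) := by
  have hs3 : Summable (fun d : ℕ => 1 / (d : ℝ) ^ 3) :=
    Real.summable_one_div_nat_pow.2 (by norm_num)
  set C : ℝ := ∑' d : ℕ, 1 / (d : ℝ) ^ 3 with hC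
  have hDs : Summable (fun D : ℕ => ((D : ℝ) + 1) ^ 2 / ((D : ℝ) + 1) ^ σ₃) := by
    have h := (summable_nat_add_iff 1).2
      (Real.summable_one_div_nat_rpow.2 (show 1 < σ₃ - 2 by linarith))
    refine h.congr ?_
    intro D
    have hp : (0 : ℝ) < (D : ℝ) + 1 := by positivity
    push_cast
    rw [Real.rpow_sub hp, Real.rpow_two, one_div_div]
  have hbig := ((hDs.mul_of_nonneg ((summable_tau σ₁ h1).mul_of_nonneg (summable_tau σ₂ h2)
    (fun _ => by simp only [Pi.zero_apply]; positivity)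
    (fun _ => by simp only [Pi.zero_apply]; positivity))
    (fun _ => by simp only [Pi.zero_apply]; positivity)
    (fun _ => by simp only [Pi.zero_apply]; positivity))).mul_left (4 * C)
  refine Summable.of_nonneg_of_le (fun p => by positivity) ?_ hbig
  rintro ⟨D, m, n⟩
  simp only
  have hsum : (∑ d ∈ (m + 1).divisors.filter
            (fun d : ℕ => (d : ℤ) ^ 2 ∣ ((D : ℤ) + 1) ∧ d ∣ (n + 1)),
          (d : ℝ) * (A (4 * (m + 1) / d) (ε * ((D : ℤ) + 1) / (d : ℤ) ^ 2) : ℝ)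
            * (A (4 * (n + 1) / d) (ε * ((D : ℤ) + 1) / (d : ℤ) ^ 2) : ℝ)) ≤
      4 * ((D : ℝ) + 1) ^ 2 * (4 * (m + 1)).divisors.card * (4 * (n + 1)).divisors.card * C := by
    refine (Finset.sum_le_sum (g := fun d : ℕ => 4 * ((D : ℝ) + 1) ^ 2 *
      (4 * (m + 1)).divisors.card * (4 * (n + 1)).divisors.card * (1 / (d : ℝ) ^ 3)) ?_).trans ?_
    · intro d hd
      simp only [Finset.mem_filter, Nat.mem_divisors] at hd
      have := term_le ε hε (D + 1) (m + 1) (n + 1) d (by omega) (by omega) (by omega)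
        (by push_cast; exact hd.2.1) hd.1.1 hd.2.2
      push_cast at this
      exact this
    · rw [← Finset.mul_sum]
      gcongr
      exact hs3.sum_le_tsum _ (fun _ _ => by positivity)
  calc _ ≤ (4 * ((D : ℝ) + 1) ^ 2 * (4 * (m + 1)).divisors.card * (4 * (n + 1)).divisors.card * C) /
        (((m : ℝ) + 1) ^ σ₁ * ((n : ℝ) + 1) ^ σ₂ * ((D : ℝ) + 1) ^ σ₃) := by gcongr
    _ = _ := by
        have a1 : ((m : ℝ) + 1) ^ σ₁ ≠ 0 := by positivity
        have a2 : ((n : ℝ) + 1) ^ σ₂ ≠ 0 := by positivity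
        have a3 : ((D : ℝ) + 1) ^ σ₃ ≠ 0 := by positivity
        field_simp
end

section
/- Let (m,b,c,n,b',c') ∈ ℝ⁶ with m > 0, n > 0 and b² − 4mc = b'² − 4nc' =: D. (i) If D > 0, then there exist unique μ, t, s ∈ (0,∞) and u, v ∈ ℝ such that m = μ²t², b = 2μ²u, c = μ²t⁻²(u²−1), n = μ²s², b' = 2μ²v, c' = μ²s⁻²(v²−1); necessarily 4μ⁴ = D, μ²t² = m and μ²s² = n. (ii) If D < 0, then there exist unique μ, t, s ∈ (0,∞) and u, v ∈ ℝ such that m = μ²t², b = 2μ²u, c = μ²t⁻²(u²+1), n = μ²s², b' = 2μ²v, c' = μ²s⁻²(v²+1); necessarily 4μ⁴ = −D. Consequently the orbit maps h ↦ h·x₊ and h ↦ h·x₋ are bijections from B⁺ onto {(x,y) : x₁ > 0, y₁ > 0, P(x,y) > 0} and {(x,y) : x₁ > 0, y₁ > 0, P(x,y) < 0} respectively, and the stabilizers of x₊ and x₋ in B⁺ are trivial. -/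
noncomputable section

/-- Action of the lower-triangular matrix `[[a,0],[c,d]]` on the coefficients
`(x₁,x₂,x₃)` of the binary quadratic form `x₁u² + x₂uv + x₃v²`. -/
def rhoAct (a c d : ℝ) (x : ℝ × ℝ × ℝ) : ℝ × ℝ × ℝ :=
  (a ^ 2 * x.1, 2 * a * c * x.1 + a * d * x.2.1,
    c ^ 2 * x.1 + c * d * x.2.1 + d ^ 2 * x.2.2)

/-- Parameters `(μ, t, s, u, v)` of the group `B⁺`. -/
abbrev Param : Type := ℝ × ℝ × ℝ × ℝ × ℝ

/-- The space `ℝ³ × ℝ³` of pairs of binary quadratic forms. -/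
abbrev Vsp : Type := (ℝ × ℝ × ℝ) × (ℝ × ℝ × ℝ)

/-- The action of `h = (μ,t,s,u,v)` on pairs of binary quadratic forms, via
`g₁ = μ·[[t,0],[u/t,1/t]]` and `g₂ = μ·[[s,0],[v/s,1/s]]`. -/
def act (p : Param) (q : Vsp) : Vsp :=
  (rhoAct (p.1 * p.2.1) (p.1 * p.2.2.2.1 / p.2.1) (p.1 / p.2.1) q.1,
   rhoAct (p.1 * p.2.2.1) (p.1 * p.2.2.2.2 / p.2.2.1) (p.1 / p.2.2.1) q.2)

/-- The parameter set `B⁺`: `μ, t, s > 0`. -/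
def Bplus : Set Param := {p | 0 < p.1 ∧ 0 < p.2.1 ∧ 0 < p.2.2.1}

/-- Discriminant of a binary quadratic form. -/
def disc (x : ℝ × ℝ × ℝ) : ℝ := x.2.1 ^ 2 - 4 * x.1 * x.2.2

/-- The base point `x₊`. -/
def xplus : Vsp := ((1, 0, -1), (1, 0, -1))

/-- The base point `x₋`. -/
def xminus : Vsp := ((1, 0, 1), (1, 0, 1))

/-- The coordinate equations of case (i) (`D > 0`), with positivity of `μ, t, s`. -/
def eqsPos (m b c n b' c' : ℝ) (p : Param) : Prop :=
  (0 < p.1 ∧ 0 < p.2.1 ∧ 0 < p.2.2.1) ∧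
  m = p.1 ^ 2 * p.2.1 ^ 2 ∧ b = 2 * p.1 ^ 2 * p.2.2.2.1 ∧
  c = p.1 ^ 2 * (p.2.1 ^ 2)⁻¹ * (p.2.2.2.1 ^ 2 - 1) ∧
  n = p.1 ^ 2 * p.2.2.1 ^ 2 ∧ b' = 2 * p.1 ^ 2 * p.2.2.2.2 ∧
  c' = p.1 ^ 2 * (p.2.2.1 ^ 2)⁻¹ * (p.2.2.2.2 ^ 2 - 1)

/-- The coordinate equations of case (ii) (`D < 0`), with positivity of `μ, t, s`. -/
def eqsNeg (m b c n b' c' : ℝ) (p : Param) : Prop :=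
  (0 < p.1 ∧ 0 < p.2.1 ∧ 0 < p.2.2.1) ∧
  m = p.1 ^ 2 * p.2.1 ^ 2 ∧ b = 2 * p.1 ^ 2 * p.2.2.2.1 ∧
  c = p.1 ^ 2 * (p.2.1 ^ 2)⁻¹ * (p.2.2.2.1 ^ 2 + 1) ∧
  n = p.1 ^ 2 * p.2.2.1 ^ 2 ∧ b' = 2 * p.1 ^ 2 * p.2.2.2.2 ∧
  c' = p.1 ^ 2 * (p.2.2.1 ^ 2)⁻¹ * (p.2.2.2.2 ^ 2 + 1)

/-- The coordinate equations with a sign `e`. -/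
def eqsE (e m b c n b' c' : ℝ) (p : Param) : Prop :=
  (0 < p.1 ∧ 0 < p.2.1 ∧ 0 < p.2.2.1) ∧
  m = p.1 ^ 2 * p.2.1 ^ 2 ∧ b = 2 * p.1 ^ 2 * p.2.2.2.1 ∧
  c = p.1 ^ 2 * (p.2.1 ^ 2)⁻¹ * (p.2.2.2.1 ^ 2 - e) ∧
  n = p.1 ^ 2 * p.2.2.1 ^ 2 ∧ b' = 2 * p.1 ^ 2 * p.2.2.2.2 ∧
  c' = p.1 ^ 2 * (p.2.2.1 ^ 2)⁻¹ * (p.2.2.2.2 ^ 2 - e)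

theorem eqsPos_iff (m b c n b' c' : ℝ) (p : Param) :
    eqsPos m b c n b' c' p ↔ eqsE 1 m b c n b' c' p := Iff.rfl

theorem eqsNeg_iff (m b c n b' c' : ℝ) (p : Param) :
    eqsNeg m b c n b' c' p ↔ eqsE (-1) m b c n b' c' p := by
  simp only [eqsNeg, eqsE, sub_neg_eq_add]

theorem eqsE_disc {e m b c n b' c' : ℝ} {p : Param} (h : eqsE e m b c n b' c' p) :
    b ^ 2 - 4 * m * c = 4 * p.1 ^ 4 * e ∧ b' ^ 2 - 4 * n * c' = 4 * p.1 ^ 4 * e := by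
  obtain ⟨⟨h1, h2, h3⟩, rfl, rfl, rfl, rfl, rfl, rfl⟩ := h
  constructor <;> field_simp <;> ring

theorem eqsE_unique {e m b c n b' c' : ℝ} (he : e ≠ 0) {p q : Param}
    (hp : eqsE e m b c n b' c' p) (hq : eqsE e m b c n b' c' q) : p = q := by
  have h1 := (eqsE_disc hp).1
  have h2 := (eqsE_disc hq).1
  obtain ⟨p1, p2, p3, p4, p5⟩ := p
  obtain ⟨q1, q2, q3, q4, q5⟩ := q
  obtain ⟨⟨a1, a2, a3⟩, a4, a5, a6, a7, a8, a9⟩ := hp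
  obtain ⟨⟨b1, b2, b3⟩, b4, b5, b6, b7, b8, b9⟩ := hq
  dsimp only at *
  have h4 : p1 ^ 4 = q1 ^ 4 := by
    have : p1 ^ 4 * e = q1 ^ 4 * e := by linarith
    exact mul_right_cancel₀ he this
  have e1 : p1 = q1 := (pow_left_inj₀ a1.le b1.le (by norm_num)).1 h4
  subst e1
  have hne : p1 ^ 2 ≠ 0 := by positivity
  have e2 : p2 = q2 := (pow_left_inj₀ a2.le b2.le two_ne_zero).1
    (mul_left_cancel₀ hne (a4.symm.trans b4))
  have e3 : p3 = q3 := (pow_left_inj₀ a3.le b3.le two_ne_zero).1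
    (mul_left_cancel₀ hne (a7.symm.trans b7))
  have hne' : 2 * p1 ^ 2 ≠ 0 := by positivity
  have e4 : p4 = q4 := mul_left_cancel₀ hne' (a5.symm.trans b5)
  have e5 : p5 = q5 := mul_left_cancel₀ hne' (a8.symm.trans b8)
  rw [e2, e3, e4, e5]

theorem eqsE_exists {e m b c n b' c' : ℝ} (he : e ^ 2 = 1) (hm : 0 < m) (hn : 0 < n)
    (h : b ^ 2 - 4 * m * c = b' ^ 2 - 4 * n * c') (hD : 0 < e * (b ^ 2 - 4 * m * c)) :
    ∃ p : Param, eqsE e m b c n b' c' p := by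
  obtain ⟨μ, hμ, h4⟩ : ∃ μ : ℝ, 0 < μ ∧ 4 * μ ^ 4 = e * (b ^ 2 - 4 * m * c) := by
    refine ⟨√(√(e * (b ^ 2 - 4 * m * c) / 4)), by positivity, ?_⟩
    have : ∀ x : ℝ, x ^ 4 = (x ^ 2) ^ 2 := fun x => by ring
    rw [this, Real.sq_sqrt (by positivity), Real.sq_sqrt (by positivity)]
    ring
  have h5 : 4 * μ ^ 4 * e = b ^ 2 - 4 * m * c := by
    rw [h4]; linear_combination (b ^ 2 - 4 * m * c) * he
  have h6 := h5.trans h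
  have hsm : 0 < √m := Real.sqrt_pos.2 hm
  have hsn : 0 < √n := Real.sqrt_pos.2 hn
  refine ⟨(μ, √m / μ, √n / μ, b / (2 * μ ^ 2), b' / (2 * μ ^ 2)),
    ⟨hμ, div_pos hsm hμ, div_pos hsn hμ⟩, ?_, ?_, ?_, ?_, ?_, ?_⟩ <;> dsimp only <;>
    try simp only [div_pow, Real.sq_sqrt hm.le, Real.sq_sqrt hn.le]
  all_goals field_simp
  · linear_combination h5
  · linear_combination h6

theorem act_iff {e : ℝ} {p : Param} (hp : p ∈ Bplus) (q : Vsp) :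
    act p ((1, 0, -e), (1, 0, -e)) = q ↔
      eqsE e q.1.1 q.1.2.1 q.1.2.2 q.2.1 q.2.2.1 q.2.2.2 p := by
  obtain ⟨p1, p2, p3, p4, p5⟩ := p
  obtain ⟨⟨m, b, c⟩, n, b', c'⟩ := q
  have hp' := hp
  obtain ⟨h1, h2, h3⟩ := hp'
  dsimp only at h1 h2 h3
  have k : ∀ t u : ℝ, 0 < t → rhoAct (p1 * t) (p1 * u / t) (p1 / t) (1, 0, -e)
      = (p1 ^ 2 * t ^ 2, 2 * p1 ^ 2 * u, p1 ^ 2 * (t ^ 2)⁻¹ * (u ^ 2 - e)) := by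
    intro t u ht
    simp only [rhoAct, Prod.mk.injEq]
    refine ⟨?_, ?_, ?_⟩ <;> field_simp <;> ring
  simp only [act, k _ _ h2, k _ _ h3, eqsE, Prod.mk.injEq, h1, h2, h3, true_and, and_assoc]
  simp only [eq_comm]

theorem bij_aux {e : ℝ} (he : e ^ 2 = 1) :
    Set.BijOn (fun p => act p ((1, 0, -e), (1, 0, -e))) Bplus
      {q : Vsp | disc q.1 = disc q.2 ∧ 0 < q.1.1 ∧ 0 < q.2.1 ∧ 0 < e * disc q.1} := by
  have he0 : e ≠ 0 := by rintro rfl; norm_num at he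
  refine ⟨?_, ?_, ?_⟩
  · intro p hp
    have h := (act_iff (e := e) hp _).1 rfl
    have hd := eqsE_disc h
    obtain ⟨⟨h1, h2, h3⟩, h4, -, -, h5, -, -⟩ := h
    refine ⟨hd.1.trans hd.2.symm, ?_, ?_, ?_⟩
    · dsimp only; rw [h4]; positivity
    · dsimp only; rw [h5]; positivity
    · have : e * disc (act p ((1, 0, -e), (1, 0, -e))).1 = 4 * p.1 ^ 4 := by
        unfold disc; rw [hd.1]; linear_combination 4 * p.1 ^ 4 * he
      dsimp only; rw [this]; positivity
  · intro p hp q hq hpq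
    exact eqsE_unique he0 ((act_iff (e := e) hp _).1 hpq) ((act_iff (e := e) hq _).1 rfl)
  · rintro q ⟨h1, h2, h3, h4⟩
    obtain ⟨p, hp⟩ := eqsE_exists he h2 h3 h1 h4
    exact ⟨p, hp.1, (act_iff hp.1 q).2 hp⟩

theorem stab_aux {e : ℝ} (he : e ^ 2 = 1) (p : Param) (hp : p ∈ Bplus)
    (h : act p ((1, 0, -e), (1, 0, -e)) = ((1, 0, -e), (1, 0, -e))) :
    p = (1, 1, 1, 0, 0) := by
  refine (bij_aux he).injOn hp (by simp [Bplus]) (h.trans ?_)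
  simp [act, rhoAct]

theorem stmt12 :
    (∀ m b c n b' c' : ℝ, 0 < m → 0 < n →
      b ^ 2 - 4 * m * c = b' ^ 2 - 4 * n * c' →
      ((0 < b ^ 2 - 4 * m * c →
          (∃! p : Param, eqsPos m b c n b' c' p) ∧
          (∀ p : Param, eqsPos m b c n b' c' p →
            4 * p.1 ^ 4 = b ^ 2 - 4 * m * c ∧
            p.1 ^ 2 * p.2.1 ^ 2 = m ∧ p.1 ^ 2 * p.2.2.1 ^ 2 = n)) ∧
       (b ^ 2 - 4 * m * c < 0 →
          (∃! p : Param, eqsNeg m b c n b' c' p) ∧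
          (∀ p : Param, eqsNeg m b c n b' c' p →
            4 * p.1 ^ 4 = -(b ^ 2 - 4 * m * c))))) ∧
    Set.BijOn (fun p => act p xplus) Bplus
      {q : Vsp | disc q.1 = disc q.2 ∧ 0 < q.1.1 ∧ 0 < q.2.1 ∧ 0 < disc q.1} ∧
    Set.BijOn (fun p => act p xminus) Bplus
      {q : Vsp | disc q.1 = disc q.2 ∧ 0 < q.1.1 ∧ 0 < q.2.1 ∧ disc q.1 < 0} ∧
    (∀ p ∈ Bplus, act p xplus = xplus → p = (1, 1, 1, 0, 0)) ∧
    (∀ p ∈ Bplus, act p xminus = xminus → p = (1, 1, 1, 0, 0)) := by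
  have xp : xplus = ((1, 0, -1), (1, 0, -1)) := rfl
  have xm : xminus = ((1, 0, -(-1)), (1, 0, -(-1))) := by simp [xminus]
  have o1 : (1 : ℝ) ^ 2 = 1 := by norm_num
  have o2 : (-1 : ℝ) ^ 2 = 1 := by norm_num
  refine ⟨?_, ?_, ?_, ?_, ?_⟩
  · intro m b c n b' c' hm hn h
    refine ⟨fun hD => ⟨?_, ?_⟩, fun hD => ⟨?_, ?_⟩⟩
    · obtain ⟨p, hp⟩ := eqsE_exists o1 hm hn h (by linarith)
      exact ⟨p, hp, fun q hq => eqsE_unique one_ne_zero hq hp⟩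
    · intro p hp
      have := (eqsE_disc ((eqsPos_iff _ _ _ _ _ _ _).1 hp)).1
      exact ⟨by linarith, hp.2.1.symm, hp.2.2.2.2.1.symm⟩
    · simp only [eqsNeg_iff]
      obtain ⟨p, hp⟩ := eqsE_exists o2 hm hn h (by linarith)
      exact ⟨p, hp, fun q hq => eqsE_unique (by norm_num) hq hp⟩
    · intro p hp
      have := (eqsE_disc ((eqsNeg_iff _ _ _ _ _ _ _).1 hp)).1
      linarith
  · have := bij_aux o1
    simp only [one_mul] at this
    exact this
  · have := bij_aux o2
    rw [← xm] at this
    simpa only [neg_mul, one_mul, neg_pos] using this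
  · intro p hp h
    exact stab_aux o1 p hp h
  · intro p hp h
    rw [xm] at h
    exact stab_aux o2 p hp h
end
end

section
/- Let a be a real number with a > 1 and let s ∈ ℂ. Then ∫₀^π (a + √(a²−1)·sin 2θ)^{s−1} dθ = ∫₀^π (a + √(a²−1)·sin 2θ)^{−s} dθ, where the complex powers are the principal powers of the (strictly positive) base a + √(a²−1)·sin 2θ. Equivalently, for t > 0 and u > √t/2, the function s ↦ 2^{s−1} t^{−(s−1)/2} ∫₀^π (u + √(u²−t/4)·sin 2θ)^{s−1} dθ is invariant under s ↦ 1−s. -/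
open MeasureTheory

lemma aux_D_pos (r c : ℝ) (hr0 : 0 ≤ r) (hr : r < 1) (hc : c ≤ 1) : 0 < 1 - 2 * r * c + r ^ 2 := by
  nlinarith [mul_le_mul_of_nonneg_left hc hr0, mul_pos (sub_pos.2 hr) (sub_pos.2 hr)]

lemma aux_E_pos (r c : ℝ) (hr0 : 0 ≤ r) (hr : r < 1) (hc : c ≤ 1) : 0 < 1 - r * c := by
  nlinarith [mul_le_mul_of_nonneg_left hc hr0]

lemma aux_deriv (r : ℝ) (hr0 : 0 ≤ r) (hr : r < 1) (x : ℝ) :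
    HasDerivAt (fun x : ℝ => x + Real.arctan (r * Real.sin (2 * x) / (1 - r * Real.cos (2 * x))))
      ((1 - r ^ 2) / (1 - 2 * r * Real.cos (2 * x) + r ^ 2)) x := by
  have hD := aux_D_pos r _ hr0 hr (Real.cos_le_one (2 * x))
  have hE := aux_E_pos r _ hr0 hr (Real.cos_le_one (2 * x))
  have h2 : HasDerivAt (fun x : ℝ => 2 * x) 2 x := by simpa using (hasDerivAt_id x).const_mul 2
  have h := (hasDerivAt_id x).add
    (((h2.sin.const_mul r).div ((h2.cos.const_mul r).const_sub 1) hE.ne').arctan)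
  refine h.congr_deriv ?_
  have hs := Real.sin_sq_add_cos_sq (2 * x)
  simp only [Pi.div_apply]
  generalize Real.cos (2 * x) = c at *
  generalize Real.sin (2 * x) = d at *
  have hd : d ^ 2 = 1 - c ^ 2 := by linarith
  have e1 : 1 + (r * d / (1 - r * c)) ^ 2 = (1 - 2 * r * c + r ^ 2) / (1 - r * c) ^ 2 := by
    field_simp
    linear_combination r ^ 2 * hd
  rw [e1]
  field_simp
  linear_combination (-2) * r ^ 2 * hd

lemma aux_cos (r : ℝ) (hr0 : 0 ≤ r) (hr : r < 1) (x : ℝ) :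
    Real.cos (2 * (x + Real.arctan (r * Real.sin (2 * x) / (1 - r * Real.cos (2 * x)))))
      = ((1 + r ^ 2) * Real.cos (2 * x) - 2 * r) / (1 - 2 * r * Real.cos (2 * x) + r ^ 2) := by
  have hD := aux_D_pos r _ hr0 hr (Real.cos_le_one (2 * x))
  have hE := aux_E_pos r _ hr0 hr (Real.cos_le_one (2 * x))
  have hs := Real.sin_sq_add_cos_sq (2 * x)
  rw [mul_add, Real.cos_add, Real.cos_two_mul (Real.arctan _), Real.sin_two_mul (Real.arctan _)]
  generalize Real.cos (2 * x) = c at *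
  generalize Real.sin (2 * x) = d at *
  have hd : d ^ 2 = 1 - c ^ 2 := by linarith
  have e1 : 1 + (r * d / (1 - r * c)) ^ 2 = (1 - 2 * r * c + r ^ 2) / (1 - r * c) ^ 2 := by
    field_simp
    linear_combination r ^ 2 * hd
  have hc2 := Real.cos_sq_arctan (r * d / (1 - r * c))
  have hsc : Real.sin (Real.arctan (r * d / (1 - r * c)))
      = (r * d / (1 - r * c)) * Real.cos (Real.arctan (r * d / (1 - r * c))) := by
    rw [Real.sin_arctan, Real.cos_arctan]; ring
  rw [hsc]
  rw [e1] at hc2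
  generalize Real.cos (Real.arctan (r * d / (1 - r * c))) = k at *
  have : c * (2 * k ^ 2 - 1) - d * (2 * (r * d / (1 - r * c) * k) * k)
    = c * (2 * k ^ 2 - 1) - d ^ 2 * 2 * (r / (1 - r * c)) * k ^ 2 := by ring
  rw [this, hc2, hd]
  obtain ⟨D, hDd⟩ : ∃ D, D = 1 - 2 * r * c + r ^ 2 := ⟨_, rfl⟩
  rw [← hDd] at hD ⊢
  field_simp
  rw [hDd]
  ring

lemma aux_per (F : ℝ → ℂ) (k : ℝ) : ∫ θ in (0:ℝ)..Real.pi, F (Real.cos (2 * (θ + k)))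
    = ∫ θ in (0:ℝ)..Real.pi, F (Real.cos (2 * θ)) := by
  rw [intervalIntegral.integral_comp_add_right (fun θ => F (Real.cos (2 * θ)))]
  have hp : Function.Periodic (fun θ : ℝ => F (Real.cos (2 * θ))) Real.pi := by
    intro x
    simp only [mul_add, Real.cos_add_two_pi]
  have := hp.intervalIntegral_add_eq (0 + k) 0
  simpa [add_comm] using this

lemma aux_sin (F : ℝ → ℂ) : ∫ θ in (0:ℝ)..Real.pi, F (Real.sin (2 * θ))
    = ∫ θ in (0:ℝ)..Real.pi, F (Real.cos (2 * θ)) := by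
  rw [← aux_per F (-(Real.pi / 4))]
  congr 1
  ext θ
  rw [← Real.cos_sub_pi_div_two]
  congr 2
  ring

lemma aux_neg (F : ℝ → ℂ) : ∫ θ in (0:ℝ)..Real.pi, F (-Real.cos (2 * θ))
    = ∫ θ in (0:ℝ)..Real.pi, F (Real.cos (2 * θ)) := by
  rw [← aux_per F (Real.pi / 2)]
  congr 1
  ext θ
  rw [← Real.cos_add_pi]
  congr 2
  ring

lemma aux_main (a : ℝ) (ha : 1 < a) (s : ℂ) :
    (∫ θ in (0:ℝ)..Real.pi,
        ((a + Real.sqrt (a ^ 2 - 1) * Real.sin (2 * θ) : ℝ) : ℂ) ^ (s - 1))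
      = (∫ θ in (0:ℝ)..Real.pi,
        ((a + Real.sqrt (a ^ 2 - 1) * Real.sin (2 * θ) : ℝ) : ℂ) ^ (-s)) := by
  have hb0 : 0 ≤ Real.sqrt (a ^ 2 - 1) := Real.sqrt_nonneg _
  have hb2 : Real.sqrt (a ^ 2 - 1) ^ 2 = a ^ 2 - 1 := Real.sq_sqrt (by nlinarith)
  generalize Real.sqrt (a ^ 2 - 1) = b at *
  have hba : b < a := by nlinarith
  have hpos : ∀ x : ℝ, -1 ≤ x → x ≤ 1 → 0 < a + b * x := fun x h1 h2 => by nlinarith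
  rw [aux_sin (fun x => ((a + b * x : ℝ) : ℂ) ^ (s - 1)),
    aux_sin (fun x => ((a + b * x : ℝ) : ℂ) ^ (-s)),
    ← aux_neg (fun x => ((a + b * x : ℝ) : ℂ) ^ (-s))]
  obtain ⟨r, hrdef⟩ : ∃ r, r = b / (a + 1) := ⟨_, rfl⟩
  have hr0 : 0 ≤ r := by rw [hrdef]; positivity
  have hr : r < 1 := by rw [hrdef, div_lt_one (by linarith)]; linarith
  have hrb : b = r * (a + 1) := by rw [hrdef]; field_simp
  have hr2 : r ^ 2 * (a + 1) = a - 1 := by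
    have : (a + 1) * (r ^ 2 * (a + 1)) = (a + 1) * (a - 1) := by
      rw [hrb] at hb2; linear_combination hb2
    exact mul_left_cancel₀ (by linarith) this
  have hcont : Continuous (fun θ : ℝ => ((a + b * Real.cos (2 * θ) : ℝ) : ℂ) ^ (s - 1)) := by
    refine Continuous.cpow (by fun_prop) continuous_const ?_
    intro x
    exact Complex.ofReal_mem_slitPlane.2 (hpos _ (Real.neg_one_le_cos _) (Real.cos_le_one _))
  have hsub := intervalIntegral.integral_deriv_smul_comp (a := 0) (b := Real.pi)
    (f := fun x : ℝ => x + Real.arctan (r * Real.sin (2 * x) / (1 - r * Real.cos (2 * x))))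
    (f' := fun x => (1 - r ^ 2) / (1 - 2 * r * Real.cos (2 * x) + r ^ 2))
    (g := fun θ : ℝ => ((a + b * Real.cos (2 * θ) : ℝ) : ℂ) ^ (s - 1))
    (fun x _ => aux_deriv r hr0 hr x)
    (Continuous.continuousOn (Continuous.div (by fun_prop) (by fun_prop)
      (fun x => (aux_D_pos r _ hr0 hr (Real.cos_le_one (2 * x))).ne'))) hcont
  simp only [mul_zero, Real.sin_zero, zero_div, Real.arctan_zero, add_zero, Real.sin_two_pi] at hsub
  rw [← hsub]
  refine intervalIntegral.integral_congr fun x _ => ?_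
  simp only [Function.comp]
  rw [aux_cos r hr0 hr x]
  have hD := aux_D_pos r _ hr0 hr (Real.cos_le_one (2 * x))
  have hP := hpos (-Real.cos (2 * x)) (by linarith [Real.cos_le_one (2 * x)])
    (by linarith [Real.neg_one_le_cos (2 * x)])
  generalize Real.cos (2 * x) = c at *
  have hPD : a + b * -c = (1 - 2 * r * c + r ^ 2) * (a + 1) / 2 := by
    rw [hrb]; linear_combination (-1/2) * hr2
  have e1 : (1 - r ^ 2) / (1 - 2 * r * c + r ^ 2) = (a + b * -c)⁻¹ := by
    rw [hPD]
    generalize 1 - 2 * r * c + r ^ 2 = D at *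
    field_simp
    linear_combination -hr2
  have e2 : a + b * (((1 + r ^ 2) * c - 2 * r) / (1 - 2 * r * c + r ^ 2)) = (a + b * -c)⁻¹ := by
    rw [← e1, hrb]
    obtain ⟨D, hDd⟩ : ∃ D, D = 1 - 2 * r * c + r ^ 2 := ⟨_, rfl⟩
    rw [← hDd] at hD ⊢
    field_simp
    linear_combination (r * c - 1) * hr2 + a * hDd
  rw [e1, e2]
  generalize a + b * -c = P at *
  have hPc : (P : ℂ) ≠ 0 := by exact_mod_cast hP.ne'
  rw [Complex.real_smul, Complex.ofReal_inv, Complex.inv_cpow _ _ (by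
    rw [Complex.arg_ofReal_of_nonneg hP.le]; exact Real.pi_pos.ne), ← Complex.cpow_neg,
    ← Complex.cpow_neg_one, ← Complex.cpow_add _ _ hPc]
  congr 1
  ring

lemma aux_scale (t u : ℝ) (ht : 0 < t) (hu : Real.sqrt t / 2 < u) (s : ℂ) :
    (2 : ℂ) ^ s * ((t : ℝ) : ℂ) ^ (-(s / 2)) *
          (∫ θ in (0:ℝ)..Real.pi,
            ((u + Real.sqrt (u ^ 2 - t / 4) * Real.sin (2 * θ) : ℝ) : ℂ) ^ s)
    = ∫ θ in (0:ℝ)..Real.pi,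
        (((2 * u / Real.sqrt t) + Real.sqrt ((2 * u / Real.sqrt t) ^ 2 - 1) * Real.sin (2 * θ) : ℝ) : ℂ) ^ s := by
  have hq : 0 < Real.sqrt t := Real.sqrt_pos.2 ht
  have hq2 : Real.sqrt t ^ 2 = t := Real.sq_sqrt ht.le
  generalize Real.sqrt t = q at *
  subst hq2
  have h1 : Real.sqrt ((2 * u / q) ^ 2 - 1) = 2 / q * Real.sqrt (u ^ 2 - q ^ 2 / 4) := by
    rw [show (2 * u / q) ^ 2 - 1 = (2 / q) ^ 2 * (u ^ 2 - q ^ 2 / 4) by field_simp; ring,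
      Real.sqrt_mul (by positivity), Real.sqrt_sq (by positivity)]
  have hqc : (q : ℂ) ≠ 0 := by exact_mod_cast hq.ne'
  have h2 : (2 : ℂ) ^ s * ((q ^ 2 : ℝ) : ℂ) ^ (-(s / 2)) = ((2 / q : ℝ) : ℂ) ^ s := by
    rw [div_eq_mul_inv 2 q, Complex.ofReal_mul 2 q⁻¹, Complex.mul_cpow_ofReal_nonneg (by norm_num) (by positivity),
      Complex.ofReal_inv, Complex.inv_cpow _ _ (by
        rw [Complex.arg_ofReal_of_nonneg hq.le]; exact Real.pi_pos.ne), ← Complex.cpow_neg,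
      pow_two, Complex.ofReal_mul q q, Complex.mul_cpow_ofReal_nonneg hq.le hq.le,
      ← Complex.cpow_add _ _ hqc]
    norm_num
    congr 1
    ring
  rw [h2, h1, ← intervalIntegral.integral_const_mul]
  congr 1
  ext θ
  rw [show 2 * u / q + 2 / q * Real.sqrt (u ^ 2 - q ^ 2 / 4) * Real.sin (2 * θ)
    = (2 / q) * (u + Real.sqrt (u ^ 2 - q ^ 2 / 4) * Real.sin (2 * θ)) by ring]
  have hw0 := Real.sqrt_nonneg (u ^ 2 - q ^ 2 / 4)
  have hw2 := Real.sq_sqrt (show 0 ≤ u ^ 2 - q ^ 2 / 4 by nlinarith)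
  generalize Real.sqrt (u ^ 2 - q ^ 2 / 4) = w at *
  have hwu : w < u := by nlinarith
  have hpos : 0 ≤ u + w * Real.sin (2 * θ) := by nlinarith [Real.neg_one_le_sin (2 * θ)]
  rw [Complex.ofReal_mul (2 / q), Complex.mul_cpow_ofReal_nonneg (by positivity) hpos]



theorem stmt17 (a : ℝ) (ha : 1 < a) (s : ℂ) :
    (∫ θ in (0:ℝ)..Real.pi,
        ((a + Real.sqrt (a ^ 2 - 1) * Real.sin (2 * θ) : ℝ) : ℂ) ^ (s - 1))
      = (∫ θ in (0:ℝ)..Real.pi,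
        ((a + Real.sqrt (a ^ 2 - 1) * Real.sin (2 * θ) : ℝ) : ℂ) ^ (-s)) ∧
    (∀ t u : ℝ, 0 < t → Real.sqrt t / 2 < u →
      (2 : ℂ) ^ (s - 1) * ((t : ℝ) : ℂ) ^ (-((s - 1) / 2)) *
          (∫ θ in (0:ℝ)..Real.pi,
            ((u + Real.sqrt (u ^ 2 - t / 4) * Real.sin (2 * θ) : ℝ) : ℂ) ^ (s - 1))
        = (2 : ℂ) ^ ((1 - s) - 1) * ((t : ℝ) : ℂ) ^ (-(((1 - s) - 1) / 2)) *
          (∫ θ in (0:ℝ)..Real.pi,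
            ((u + Real.sqrt (u ^ 2 - t / 4) * Real.sin (2 * θ) : ℝ) : ℂ) ^ ((1 - s) - 1))) := by

  refine ⟨aux_main a ha s, fun t u ht hu => ?_⟩
  rw [aux_scale t u ht hu, aux_scale t u ht hu]
  have hq : 0 < Real.sqrt t := Real.sqrt_pos.2 ht
  rw [aux_main _ (by rw [lt_div_iff₀ hq]; linarith) s]
  congr 1
  ext θ
  congr 1
  ring
end

section
/- Let a be a real number and let s ∈ ℂ with 0 < Re(s) < 1. Then both integrals below converge and sin(πs/2) · ∫₀^π |a + √(a²+1)·sin 2θ|^{s−1} dθ = cos(πs/2) · ∫₀^π |a + √(a²+1)·sin 2θ|^{−s} dθ. Equivalently, for t > 0 and u ∈ ℝ, the function s ↦ sin(πs/2) · 2^{s−1} t^{−(s−1)/2} ∫₀^π |u + √(u²+t/4)·sin 2θ|^{s−1} dθ is invariant under s ↦ 1−s on the strip 0 < Re(s) < 1. -/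
open MeasureTheory

lemma circ_aux (c : ℝ) (hc : 0 < c) (z : ℂ) (w : ℂ) (hz : z.im ≠ 0)
    (hw : (c:ℂ) * w ^ 2 + 2 * Complex.I * z * w - c = 0) : ‖w‖ ≠ 1 := by
  intro h
  have h1 : w * (starRingEnd ℂ) w = 1 := by
    rw [Complex.mul_conj, Complex.normSq_eq_norm_sq, h]; simp
  have h2 : 2 * Complex.I * z = c * ((starRingEnd ℂ) w - w) := by
    linear_combination (starRingEnd ℂ w) * hw - (2 * Complex.I * z + c * w) * h1
  have h3 := congrArg Complex.re h2
  simp at h3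
  exact hz h3

lemma circ_int (c : ℝ) (hc : 0 < c) (z : ℂ) (hz : z.im ≠ 0) :
    ∃ D : ℂ, D ^ 2 = (c:ℂ) ^ 2 - z ^ 2 ∧
      ∫ φ in (0:ℝ)..2 * Real.pi, (z + c * (Real.sin φ : ℂ))⁻¹ = 2 * Real.pi * Complex.I / D := by
  have hc' : (c:ℂ) ≠ 0 := by exact_mod_cast hc.ne'
  have key : ∃ w : ℂ, (c:ℂ) * w ^ 2 + 2 * Complex.I * z * w - c = 0 ∧ ‖w‖ < 1 := by
    obtain ⟨D, hD⟩ := IsAlgClosed.exists_pow_nat_eq ((c:ℂ) ^ 2 - z ^ 2) (n := 2) (by norm_num)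
    have e1 : (c:ℂ) * ((-Complex.I * z + D) / c) ^ 2 +
        2 * Complex.I * z * ((-Complex.I * z + D) / c) - c = 0 := by
      field_simp
      linear_combination hD - z ^ 2 * Complex.I_sq
    have e2 : (c:ℂ) * ((-Complex.I * z - D) / c) ^ 2 +
        2 * Complex.I * z * ((-Complex.I * z - D) / c) - c = 0 := by
      field_simp
      linear_combination hD - z ^ 2 * Complex.I_sq
    have hp : ((-Complex.I * z + D) / c) * ((-Complex.I * z - D) / c) = -1 := by
      field_simp
      linear_combination -hD + z ^ 2 * Complex.I_sq
    by_cases h : ‖(-Complex.I * z + D) / c‖ < 1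
    · exact ⟨_, e1, h⟩
    · refine ⟨_, e2, ?_⟩
      have n1 := circ_aux c hc z _ hz e1
      have hn := congrArg norm hp
      rw [norm_mul, norm_neg, norm_one] at hn
      have : 1 < ‖(-Complex.I * z + D) / c‖ := lt_of_le_of_ne (not_lt.mp h) (Ne.symm n1)
      by_contra h5
      nlinarith [not_lt.mp h5]
  obtain ⟨w, hw, hwn⟩ := key
  have hw0 : w ≠ 0 := by
    rintro rfl
    simp at hw
    exact hc.ne' hw
  have hwpos : 0 < ‖w‖ := norm_pos_iff.mpr hw0
  set v : ℂ := -w⁻¹ with hv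
  have hvw : w * v = -1 := by rw [hv]; field_simp
  have hvn : 1 < ‖v‖ := by
    rw [hv, norm_neg, norm_inv]; exact (one_lt_inv₀ hwpos).mpr hwn
  have hsum : (c:ℂ) * (w + v) = -2 * Complex.I * z := by
    have : w * ((c:ℂ) * (w + v) + 2 * Complex.I * z) = 0 := by
      linear_combination hw + c * hvw
    have := (mul_eq_zero.mp this).resolve_left hw0
    linear_combination this
  have hwv : w - v ≠ 0 := by
    intro h
    have : w = v := by linear_combination h
    rw [← this] at hvn; linarith
  refine ⟨c * (w - v) / 2, ?_, ?_⟩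
  · linear_combination (1/4) * ((c:ℂ) * (w + v) + (-2 * Complex.I * z)) * hsum - c^2 * hvw + z ^ 2 * Complex.I_sq
  · have hd : DifferentiableOn ℂ (fun u : ℂ => (u - v)⁻¹) (Metric.closedBall 0 1) := by
      intro u hu
      have : u - v ≠ 0 := by
        intro h
        have : u = v := by linear_combination h
        rw [this] at hu
        simp at hu; linarith
      fun_prop (disch := exact this)
    have hC := hd.circleIntegral_sub_inv_smul (w := w) (by simpa using hwn)
    rw [circleIntegral] at hC
    have : ∀ φ : ℝ, deriv (circleMap 0 1) φ • ((circleMap 0 1 φ - w)⁻¹ • (circleMap 0 1 φ - v)⁻¹)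
        = (c:ℂ) / 2 * (z + c * (Real.sin φ : ℂ))⁻¹ := by
      intro φ
      rw [deriv_circleMap]
      have hE : circleMap 0 1 φ = Complex.exp (φ * Complex.I) := by simp [circleMap]
      set e := circleMap 0 1 φ with he
      have hen : ‖e‖ = 1 := by simp [he]
      have he0 : e ≠ 0 := by intro h; rw [h] at hen; simp at hen
      have hs : (Real.sin φ : ℂ) = (e⁻¹ - e) * Complex.I / 2 := by
        rw [hE, ← Complex.exp_neg, Complex.ofReal_sin, Complex.sin]
        ring_nf
      have n1 : e - w ≠ 0 := by
        intro h
        have : e = w := by linear_combination h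
        rw [this] at hen; linarith
      have n2 : e - v ≠ 0 := by
        intro h
        have : e = v := by linear_combination h
        rw [this] at hen; linarith
      have hid : (c:ℂ) * ((e - w) * (e - v)) = 2 * Complex.I * e * (z + c * (Real.sin φ : ℂ)) := by
        rw [hs]
        field_simp
        linear_combination -e * hsum + c * hvw - (c * (1 - e^2)) * Complex.I_sq
      have n3 : z + c * (Real.sin φ : ℂ) ≠ 0 := by
        intro h
        rw [h] at hid
        simp [hc', n1, n2] at hid
      simp only [smul_eq_mul]
      rw [← mul_inv]
      have h4 : (e - w) * (e - v) = 2 * Complex.I * e * (z + c * (Real.sin φ : ℂ)) / c := by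
        rw [← hid]; field_simp
      rw [h4]
      field_simp
    simp_rw [this] at hC
    rw [intervalIntegral.integral_const_mul] at hC
    rw [smul_eq_mul] at hC
    have h2 : (∫ φ in (0:ℝ)..2 * Real.pi, (z + c * (Real.sin φ : ℂ))⁻¹) = 2 / c * ((c:ℂ) / 2 * ∫ φ in (0:ℝ)..2 * Real.pi, (z + c * (Real.sin φ : ℂ))⁻¹) := by
      field_simp
    rw [h2, hC]
    field_simp

noncomputable def Qf (a θ : ℝ) : ℝ := a + Real.sqrt (a ^ 2 + 1) * Real.sin (2 * θ)

noncomputable def Mf (a x : ℝ) : ℝ := ∫ θ in (0:ℝ)..Real.pi, x / (x ^ 2 + Qf a θ ^ 2)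

lemma Qf_cont (a : ℝ) : Continuous (Qf a) := by unfold Qf; fun_prop

lemma k_cont (a x : ℝ) (hx : 0 < x) : Continuous (fun θ => x / (x ^ 2 + Qf a θ ^ 2)) := by
  have := Qf_cont a
  refine Continuous.div (by fun_prop) (by fun_prop) fun θ => ?_
  positivity

lemma Mf_eq (a x : ℝ) (hx : 0 < x) : ∃ D : ℂ, D ^ 2 = 1 + x ^ 2 + 2 * Complex.I * a * x ∧
    0 < D.re ∧ Mf a x = (Real.pi / D).re := by
  set c := Real.sqrt (a ^ 2 + 1) with hcdef
  have hc : 0 < c := Real.sqrt_pos.mpr (by positivity)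
  have hc2 : c ^ 2 = a ^ 2 + 1 := Real.sq_sqrt (by positivity)
  have hc2' : (c:ℂ) ^ 2 = a ^ 2 + 1 := by exact_mod_cast hc2
  obtain ⟨D, hD, hI⟩ := circ_int c hc (a - x * Complex.I) (by simp [hx.ne'])
  have hM : Mf a x = (Real.pi / D).re := by
    have h1 : ∫ θ in (0:ℝ)..Real.pi, ((a - x * Complex.I) + c * (Real.sin (2 * θ) : ℂ))⁻¹
        = Real.pi * Complex.I / D := by
      rw [intervalIntegral.integral_comp_mul_left
        (fun φ : ℝ => ((a - x * Complex.I) + c * (Real.sin φ : ℂ))⁻¹) (two_ne_zero)]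
      rw [mul_zero, hI]
      rw [Complex.real_smul]
      push_cast
      ring
    have hcont : Continuous fun θ : ℝ => ((a - x * Complex.I) + c * (Real.sin (2 * θ) : ℂ))⁻¹ := by
      refine Continuous.inv₀ (by fun_prop) fun θ h => ?_
      have := congrArg Complex.im h
      rw [← Complex.ofReal_mul] at this
      simp [-Complex.ofReal_mul, -Complex.ofReal_sin] at this
      exact hx.ne' this
    have h2 := Complex.imCLM.intervalIntegral_comp_comm (hcont.intervalIntegrable (μ := volume) 0 Real.pi)
    rw [h1] at h2
    have h3 : Complex.imCLM (Real.pi * Complex.I / D) = (Real.pi / D).re := by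
      rw [Complex.imCLM_apply, mul_div_right_comm]
      simp
    rw [h3] at h2
    rw [← h2, Mf]
    congr 1
    ext θ
    have : ((a - x * Complex.I) + c * (Real.sin (2 * θ) : ℂ)) = (Qf a θ : ℂ) - x * Complex.I := by
      rw [Qf]; push_cast; ring
    rw [this, Complex.imCLM_apply, Complex.inv_im, Complex.normSq_apply]
    simp
    ring
  refine ⟨D, ?_, ?_, hM⟩
  · rw [hD, hc2']; linear_combination - (x:ℂ)^2 * Complex.I_sq
  · have hpos : 0 < Mf a x := by
      apply intervalIntegral.intervalIntegral_pos_of_pos_on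
        ((k_cont a x hx).intervalIntegrable _ _) _ Real.pi_pos
      intro θ _
      positivity
    rw [hM, div_eq_mul_inv, Complex.re_ofReal_mul, Complex.inv_re] at hpos
    have h5 := (mul_pos_iff_of_pos_left Real.pi_pos).mp hpos
    by_contra h6
    have := div_nonpos_of_nonpos_of_nonneg (not_lt.mp h6) (Complex.normSq_nonneg D)
    linarith

lemma Mf_nonneg (a x : ℝ) (hx : 0 < x) : 0 ≤ Mf a x := by
  apply intervalIntegral.integral_nonneg Real.pi_pos.le
  intro θ _
  positivity

lemma Mf_le (a x : ℝ) (hx : 0 < x) : Mf a x ≤ Real.pi := by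
  obtain ⟨D, hD, -, hM⟩ := Mf_eq a x hx
  have h1 : 1 ≤ ‖D‖ := by
    have : 1 ≤ ‖D‖ ^ 2 := by
      rw [← norm_pow, hD]
      have := Complex.re_le_norm (1 + (x:ℂ) ^ 2 + 2 * Complex.I * a * x)
      have h2 : (1 + (x:ℂ) ^ 2 + 2 * Complex.I * a * x).re = 1 + x ^ 2 := by
        simp [← Complex.ofReal_pow]
      nlinarith [sq_nonneg x]
    nlinarith [norm_nonneg D]
  rw [hM]
  refine (Complex.re_le_norm _).trans ?_
  rw [norm_div, Complex.norm_real, Real.norm_of_nonneg Real.pi_pos.le]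
  exact div_le_self Real.pi_pos.le h1

lemma Mf_inv (a x : ℝ) (hx : 0 < x) : Mf a x⁻¹ = x * Mf a x := by
  obtain ⟨D, hD, hDp, hM⟩ := Mf_eq a x hx
  obtain ⟨E, hE, hEp, hM'⟩ := Mf_eq a x⁻¹ (inv_pos.mpr hx)
  have hx' : (x:ℂ) ≠ 0 := by exact_mod_cast hx.ne'
  have h : (x * E) ^ 2 = D ^ 2 := by
    rw [mul_pow, hE, hD]
    push_cast
    field_simp
    ring
  have h2 : D = x * E := by
    rcases sq_eq_sq_iff_eq_or_eq_neg.mp h with h | h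
    · exact h.symm
    · have := congrArg Complex.re h
      rw [Complex.re_ofReal_mul, Complex.neg_re] at this
      nlinarith [mul_pos hx hEp]
  rw [hM, hM', h2, ← Complex.re_ofReal_mul]
  congr 1
  field_simp


lemma mellin_one_add {s : ℂ} (h0 : 0 < s.re) (h1 : s.re < 1) :
    mellin (fun x : ℝ => ((1 + x : ℝ) : ℂ)⁻¹) s = Real.pi / Complex.sin (Real.pi * s) := by
  have hB := Complex.Gamma_mul_Gamma_eq_betaIntegral (s := s) (t := 1 - s) h0 (by simpa using h1)
  rw [Complex.Gamma_mul_Gamma_one_sub] at hB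
  simp only [add_sub_cancel, Complex.Gamma_one, one_mul] at hB
  rw [hB, Complex.betaIntegral, intervalIntegral.integral_of_le zero_le_one,
    integral_Ioc_eq_integral_Ioo]
  have him : (fun x : ℝ => x / (1 + x)) '' Set.Ioi 0 = Set.Ioo 0 1 := by
    ext u
    simp only [Set.mem_image, Set.mem_Ioi, Set.mem_Ioo]
    constructor
    · rintro ⟨x, hx, rfl⟩
      refine ⟨by positivity, ?_⟩
      rw [div_lt_one (by positivity)]; linarith
    · rintro ⟨hu, hu'⟩
      have : 0 < 1 - u := by linarith
      refine ⟨u / (1 - u), by positivity, ?_⟩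
      field_simp
      ring
  have hder : ∀ x ∈ Set.Ioi (0:ℝ), HasDerivWithinAt (fun x : ℝ => x / (1 + x)) (1 / (1 + x) ^ 2) (Set.Ioi 0) x := by
    intro x hx
    have hx : 0 < x := hx
    have := (hasDerivAt_id x).div ((hasDerivAt_id x).const_add 1) (by simp; positivity)
    have h2 : (1 * (1 + id x) - id x * 1) / (1 + id x) ^ 2 = 1 / (1 + x) ^ 2 := by
      simp
    rw [h2] at this
    exact this.hasDerivWithinAt
  have hinj : Set.InjOn (fun x : ℝ => x / (1 + x)) (Set.Ioi 0) := by
    intro x hx y hy h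
    have hx : 0 < x := hx
    have hy : 0 < y := hy
    have h : x / (1 + x) = y / (1 + y) := h
    rw [div_eq_div_iff (by positivity) (by positivity)] at h
    linarith
  rw [← him, integral_image_eq_integral_abs_deriv_smul measurableSet_Ioi hder hinj, mellin]
  refine setIntegral_congr_fun measurableSet_Ioi fun x hx => ?_
  have hx : 0 < x := hx
  have hx1 : 0 < 1 + x := by positivity
  have hc1 : ((1 + x : ℝ) : ℂ) ≠ 0 := by exact_mod_cast hx1.ne'
  simp only [smul_eq_mul, Complex.real_smul]
  rw [abs_of_pos (by positivity)]
  have e1 : (1 : ℂ) - ((x / (1 + x) : ℝ) : ℂ) = (((1 + x)⁻¹ : ℝ) : ℂ) := by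
    rw [← Complex.ofReal_one, ← Complex.ofReal_sub]
    congr 1
    field_simp
    ring
  rw [e1, div_eq_mul_inv x, Complex.ofReal_mul, Complex.mul_cpow_ofReal_nonneg hx.le (by positivity),
    mul_assoc, ← Complex.cpow_add _ _ (by exact_mod_cast (inv_pos.mpr hx1).ne')]
  have : s - 1 + (1 - s - 1) = -1 := by ring
  rw [this, Complex.cpow_neg_one]
  push_cast at hc1 ⊢
  field_simp

lemma mellin_one_add_sq {s : ℂ} (h0 : 0 < s.re) (h1 : s.re < 2) :
    mellin (fun x : ℝ => ((1 + x ^ 2 : ℝ) : ℂ)⁻¹) s = Real.pi / (2 * Complex.sin (Real.pi * s / 2)) := by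
  have h := mellin_comp_rpow (fun x : ℝ => ((1 + x : ℝ) : ℂ)⁻¹) s 2
  rw [mellin_one_add (by simpa using h0) (by simp; linarith)] at h
  simp only [Real.rpow_two] at h
  rw [h, Complex.real_smul]
  push_cast
  rw [abs_of_pos (by norm_num : (0:ℝ) < 2)]
  push_cast
  rw [mul_div_assoc]
  ring

lemma mellin_ker {s : ℂ} (h0 : 0 < s.re) (h1 : s.re < 1) (q : ℝ) :
    mellin (fun x : ℝ => ((x / (x ^ 2 + q ^ 2) : ℝ) : ℂ)) s =
      Real.pi / (2 * Complex.cos (Real.pi * s / 2)) * ((|q| : ℝ) : ℂ) ^ (s - 1) := by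
  rcases eq_or_ne q 0 with rfl | hq
  · have : s - 1 ≠ 0 := by
      intro h
      have := congrArg Complex.re h
      simp at this; linarith
    rw [abs_zero, Complex.ofReal_zero, Complex.zero_cpow this, mul_zero, ← setIntegral_Ioi_zero_cpow (s - 2),
      mellin]
    refine setIntegral_congr_fun measurableSet_Ioi fun x hx => ?_
    have hx : 0 < x := hx
    have hxc : (x:ℂ) ≠ 0 := by exact_mod_cast hx.ne'
    have : s - 2 = s - 1 + (-1) := by ring
    simp only [smul_eq_mul]
    rw [this, Complex.cpow_add _ _ hxc, Complex.cpow_neg_one]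
    congr 1
    push_cast
    field_simp
    ring
  · set A := |q| with hA
    have hAp : 0 < A := abs_pos.mpr hq
    have hAc : (A:ℂ) ≠ 0 := by exact_mod_cast hAp.ne'
    have h := mellin_comp_mul_left (fun x : ℝ => ((1 + x ^ 2 : ℝ) : ℂ)⁻¹) (s + 1) (inv_pos.mpr hAp)
    rw [mellin_one_add_sq (by simp; linarith) (by simp; linarith)] at h
    have hs : Complex.sin (Real.pi * (s + 1) / 2) = Complex.cos (Real.pi * s / 2) := by
      rw [← Complex.sin_add_pi_div_two]; congr 1; ring
    rw [hs] at h
    have h3 : mellin (fun x : ℝ => ((x / (x ^ 2 + q ^ 2) : ℝ) : ℂ)) s =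
        ((A:ℂ) ^ 2)⁻¹ * mellin (fun x : ℝ => ((1 + (A⁻¹ * x) ^ 2 : ℝ) : ℂ)⁻¹) (s + 1) := by
      rw [mellin, mellin, ← integral_const_mul]
      refine setIntegral_congr_fun measurableSet_Ioi fun x hx => ?_
      have hx : 0 < x := hx
      have hxc : (x:ℂ) ≠ 0 := by exact_mod_cast hx.ne'
      have : s + 1 - 1 = s - 1 + 1 := by ring
      simp only [smul_eq_mul]
      rw [this, Complex.cpow_add _ _ hxc, Complex.cpow_one, mul_assoc, mul_left_comm]
      congr 1
      rw [← sq_abs q, ← hA]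
      norm_cast
      field_simp
      ring
    rw [h3, h, smul_eq_mul]
    have h4 : ((A⁻¹:ℝ):ℂ) ^ (-(s + 1)) = (A:ℂ) ^ (s - 1) * (A:ℂ) ^ 2 := by
      rw [Complex.ofReal_inv, Complex.inv_cpow _ _ (by rw [Complex.arg_ofReal_of_nonneg hAp.le]; exact Real.pi_pos.ne), Complex.cpow_neg, inv_inv]
      have : s + 1 = s - 1 + 2 := by ring
      rw [this, Complex.cpow_add _ _ hAc]
      norm_cast
    rw [h4]
    field_simp

noncomputable def Ff (a : ℝ) (s : ℂ) (θ x : ℝ) : ℂ :=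
  (x : ℂ) ^ (s - 1) * ((x / (x ^ 2 + Qf a θ ^ 2) : ℝ) : ℂ)

lemma Ff_norm (a : ℝ) (s : ℂ) (θ x : ℝ) (hx : 0 < x) :
    ‖Ff a s θ x‖ = x ^ (s.re - 1) * (x / (x ^ 2 + Qf a θ ^ 2)) := by
  rw [Ff, norm_mul, Complex.norm_cpow_eq_rpow_re_of_pos hx, Complex.norm_real,
    Real.norm_of_nonneg (by positivity)]
  simp

lemma Ff_integrable (a : ℝ) {s : ℂ} (h0 : 0 < s.re) (h1 : s.re < 1) :
    Integrable (Function.uncurry (Ff a s))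
      ((volume.restrict (Set.uIoc 0 Real.pi)).prod (volume.restrict (Set.Ioi 0))) := by
  have hQ := (Qf_cont a).measurable
  have hmeas : Measurable (Function.uncurry (Ff a s)) := by
    unfold Function.uncurry Ff
    have : Measurable fun p : ℝ × ℝ => (p.2 : ℂ) := by fun_prop
    have h2 : Measurable fun p : ℝ × ℝ => p.2 / (p.2 ^ 2 + Qf a p.1 ^ 2) := by fun_prop
    exact (this.pow_const (s - 1)).mul (Complex.measurable_ofReal.comp h2)
  have hm := hmeas.aestronglyMeasurable (μ := (volume.restrict (Set.uIoc 0 Real.pi)).prod (volume.restrict (Set.Ioi (0:ℝ))))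
  have hnorm : ∀ x : ℝ, 0 < x → ∫ θ in Set.uIoc 0 Real.pi, ‖Ff a s θ x‖ = x ^ (s.re - 1) * Mf a x := by
    intro x hx
    simp_rw [Ff_norm a s _ x hx]
    rw [integral_const_mul, Mf, intervalIntegral.integral_of_le Real.pi_pos.le, Set.uIoc_of_le Real.pi_pos.le]
  rw [integrable_prod_iff' hm]
  constructor
  · filter_upwards [ae_restrict_mem measurableSet_Ioi] with x hx
    have hx : 0 < x := hx
    have hc : Continuous fun θ => Ff a s θ x := by
      unfold Ff
      exact continuous_const.mul (Complex.continuous_ofReal.comp (k_cont a x hx))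
    exact (intervalIntegrable_iff.mp (hc.intervalIntegrable (μ := volume) 0 Real.pi))
  · have hm2 : AEStronglyMeasurable (fun x => ∫ θ in Set.uIoc 0 Real.pi, ‖Function.uncurry (Ff a s) (θ, x)‖)
        (volume.restrict (Set.Ioi (0:ℝ))) := hm.norm.prod_swap.integral_prod_right'
    change IntegrableOn _ _ _
    rw [← Set.Ioc_union_Ioi_eq_Ioi (zero_le_one' ℝ)]
    refine IntegrableOn.union ?_ ?_
    · have hi : IntegrableOn (fun x : ℝ => x ^ (s.re - 1) * Real.pi) (Set.Ioc 0 1) := by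
        have := intervalIntegral.intervalIntegrable_rpow' (a := 0) (b := 1) (r := s.re - 1) (by linarith)
        rw [intervalIntegrable_iff_integrableOn_Ioc_of_le zero_le_one] at this
        exact this.mul_const _
      refine Integrable.mono' hi (hm2.mono_measure (Measure.restrict_mono Set.Ioc_subset_Ioi_self le_rfl)) ?_
      filter_upwards [ae_restrict_mem measurableSet_Ioc] with x hx
      have hx : 0 < x := hx.1
      simp only [Function.uncurry]
      rw [hnorm x hx, Real.norm_of_nonneg (mul_nonneg (by positivity) (Mf_nonneg a x hx))]
      exact mul_le_mul_of_nonneg_left (Mf_le a x hx) (by positivity)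
    · have hi : IntegrableOn (fun x : ℝ => x ^ (s.re - 2) * Real.pi) (Set.Ioi 1) :=
        (integrableOn_Ioi_rpow_of_lt (by linarith) one_pos).mul_const _
      refine Integrable.mono' hi (hm2.mono_measure (Measure.restrict_mono (Set.Ioi_subset_Ioi zero_le_one) le_rfl)) ?_
      filter_upwards [ae_restrict_mem measurableSet_Ioi] with x hx
      have hx : 0 < x := lt_trans one_pos hx
      simp only [Function.uncurry]
      rw [hnorm x hx, Real.norm_of_nonneg (mul_nonneg (by positivity) (Mf_nonneg a x hx))]
      have h3 : x ^ (s.re - 1) = x ^ (s.re - 2) * x := by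
        rw [← Real.rpow_add_one hx.ne']; congr 1; ring
      rw [h3, mul_assoc, ← Mf_inv a x hx]
      exact mul_le_mul_of_nonneg_left (Mf_le a x⁻¹ (inv_pos.mpr hx)) (by positivity)

lemma Ff_int_x (a : ℝ) {s : ℂ} (h0 : 0 < s.re) (h1 : s.re < 1) (θ : ℝ) :
    ∫ x in Set.Ioi 0, Ff a s θ x =
      Real.pi / (2 * Complex.cos (Real.pi * s / 2)) * ((|Qf a θ| : ℝ) : ℂ) ^ (s - 1) := by
  rw [← mellin_ker h0 h1]; rfl

lemma cos_ne {s : ℂ} (h0 : 0 < s.re) (h1 : s.re < 1) : Complex.cos (Real.pi * s / 2) ≠ 0 := by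
  rw [Complex.cos_ne_zero_iff]
  intro k h
  have h2 := congrArg Complex.re h
  have h3 : (Real.pi * s / 2 : ℂ).re = Real.pi * s.re / 2 := by
    rw [show (Real.pi * s / 2 : ℂ) = ((Real.pi / 2 : ℝ) : ℂ) * s by push_cast; ring, Complex.re_ofReal_mul]
    ring
  have h4 : ((2 * k + 1) * Real.pi / 2 : ℂ) = (((2 * k + 1) * Real.pi / 2 : ℝ) : ℂ) := by push_cast; ring
  rw [h3, h4, Complex.ofReal_re] at h2
  have h5 : s.re = 2 * k + 1 := by
    have := Real.pi_pos
    field_simp at h2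
    linarith
  have h6 : (0:ℝ) < ((2 * k + 1 : ℤ) : ℝ) := by push_cast; linarith
  have h7 : ((2 * k + 1 : ℤ) : ℝ) < ((1:ℤ) : ℝ) := by push_cast; linarith
  rw [Int.cast_lt] at h7
  have h6 : 0 < 2 * k + 1 := by exact_mod_cast h6
  omega

lemma I_integrable (a : ℝ) {s : ℂ} (h0 : 0 < s.re) (h1 : s.re < 1) :
    IntervalIntegrable (fun θ : ℝ => ((|Qf a θ| : ℝ) : ℂ) ^ (s - 1)) volume 0 Real.pi := by
  rw [intervalIntegrable_iff]
  have h := (Ff_integrable a h0 h1).integral_prod_left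
  simp only [Function.uncurry] at h
  simp_rw [Ff_int_x a h0 h1] at h
  have hne : (Real.pi : ℂ) / (2 * Complex.cos (Real.pi * s / 2)) ≠ 0 := by
    have := cos_ne h0 h1
    have := Complex.ofReal_ne_zero.mpr Real.pi_ne_zero
    exact div_ne_zero this (mul_ne_zero two_ne_zero (cos_ne h0 h1))
  have h2 := h.const_mul (Real.pi / (2 * Complex.cos (Real.pi * s / 2)) : ℂ)⁻¹
  simp_rw [inv_mul_cancel_left₀ hne] at h2
  exact h2

lemma I_eq (a : ℝ) {s : ℂ} (h0 : 0 < s.re) (h1 : s.re < 1) :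
    Real.pi / (2 * Complex.cos (Real.pi * s / 2)) *
      ∫ θ in (0:ℝ)..Real.pi, ((|Qf a θ| : ℝ) : ℂ) ^ (s - 1) = mellin (fun x => (Mf a x : ℂ)) s := by
  have h := intervalIntegral_integral_swap (Ff_integrable a h0 h1)
  simp_rw [Ff_int_x a h0 h1] at h
  rw [intervalIntegral.integral_const_mul] at h
  rw [h, mellin]
  congr 1
  ext x
  simp only [Ff, Mf]
  rw [intervalIntegral.integral_const_mul, intervalIntegral.integral_ofReal, smul_eq_mul]

lemma mellin_Mf (a : ℝ) (s : ℂ) :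
    mellin (fun x => (Mf a x : ℂ)) (1 - s) = mellin (fun x => (Mf a x : ℂ)) s := by
  have h := mellin_comp_inv (fun x => (Mf a x : ℂ)) (-(1 - s))
  rw [neg_neg] at h
  rw [← h, mellin, mellin]
  refine setIntegral_congr_fun measurableSet_Ioi fun x hx => ?_
  have hx : 0 < x := hx
  have hxc : (x:ℂ) ≠ 0 := by exact_mod_cast hx.ne'
  simp only [smul_eq_mul]
  rw [Mf_inv a x hx, Complex.ofReal_mul, ← mul_assoc]
  congr 1
  have : s - 1 = -(1 - s) - 1 + 1 := by ring
  rw [this, Complex.cpow_add _ _ hxc, Complex.cpow_one]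

lemma main_eq (a : ℝ) {s : ℂ} (h0 : 0 < s.re) (h1 : s.re < 1) :
    Complex.sin (Real.pi * s / 2) * ∫ θ in (0:ℝ)..Real.pi, ((|Qf a θ| : ℝ) : ℂ) ^ (s - 1) =
    Complex.cos (Real.pi * s / 2) * ∫ θ in (0:ℝ)..Real.pi, ((|Qf a θ| : ℝ) : ℂ) ^ (-s) := by
  have g0 : 0 < (1 - s).re := by simpa using h1
  have g1 : (1 - s).re < 1 := by simpa using h0
  have e1 := I_eq a h0 h1
  have e2 := I_eq a g0 g1
  have hc := cos_ne h0 h1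
  have hs := cos_ne g0 g1
  rw [mellin_Mf, ← e1] at e2
  have h3 : Complex.cos (Real.pi * (1 - s) / 2) = Complex.sin (Real.pi * s / 2) := by
    rw [← Complex.cos_pi_div_two_sub]; congr 1; ring
  rw [h3] at e2 hs
  have h4 : 1 - s - 1 = -s := by ring
  rw [h4] at e2
  have hpi := Complex.ofReal_ne_zero.mpr Real.pi_ne_zero
  field_simp at e2
  linear_combination -e2

theorem stmt18 (a : ℝ) (s : ℂ) (h0 : 0 < s.re) (h1 : s.re < 1) :
    IntervalIntegrable
      (fun θ : ℝ => ((|a + Real.sqrt (a ^ 2 + 1) * Real.sin (2 * θ)| : ℝ) : ℂ) ^ (s - 1))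
      volume 0 Real.pi ∧
    IntervalIntegrable
      (fun θ : ℝ => ((|a + Real.sqrt (a ^ 2 + 1) * Real.sin (2 * θ)| : ℝ) : ℂ) ^ (-s))
      volume 0 Real.pi ∧
    Complex.sin ((Real.pi : ℂ) * s / 2) *
        (∫ θ in (0:ℝ)..Real.pi,
          ((|a + Real.sqrt (a ^ 2 + 1) * Real.sin (2 * θ)| : ℝ) : ℂ) ^ (s - 1))
      = Complex.cos ((Real.pi : ℂ) * s / 2) *
        (∫ θ in (0:ℝ)..Real.pi,
          ((|a + Real.sqrt (a ^ 2 + 1) * Real.sin (2 * θ)| : ℝ) : ℂ) ^ (-s)) ∧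
    (∀ t u : ℝ, 0 < t →
      Complex.sin ((Real.pi : ℂ) * s / 2) * (2 : ℂ) ^ (s - 1) *
          ((t : ℝ) : ℂ) ^ (-((s - 1) / 2)) *
          (∫ θ in (0:ℝ)..Real.pi,
            ((|u + Real.sqrt (u ^ 2 + t / 4) * Real.sin (2 * θ)| : ℝ) : ℂ) ^ (s - 1))
        = Complex.sin ((Real.pi : ℂ) * (1 - s) / 2) * (2 : ℂ) ^ ((1 - s) - 1) *
          ((t : ℝ) : ℂ) ^ (-(((1 - s) - 1) / 2)) *
          (∫ θ in (0:ℝ)..Real.pi,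
            ((|u + Real.sqrt (u ^ 2 + t / 4) * Real.sin (2 * θ)| : ℝ) : ℂ) ^ ((1 - s) - 1))) := by
  refine ⟨I_integrable a h0 h1, ?_, main_eq a h0 h1, ?_⟩
  · have := I_integrable a (s := 1 - s) (by simpa using h1) (by simpa using h0)
    rw [show 1 - s - 1 = -s by ring] at this
    exact this
  · intro t u ht
    set r := Real.sqrt t / 2 with hr
    have hst : 0 < Real.sqrt t := Real.sqrt_pos.mpr ht
    have hrp : 0 < r := by positivity
    have hr2 : r ^ 2 = t / 4 := by rw [hr, div_pow, Real.sq_sqrt ht.le]; norm_num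
    have hrc : (r : ℂ) ≠ 0 := by exact_mod_cast hrp.ne'
    have hsq : Real.sqrt (u ^ 2 + t / 4) = r * Real.sqrt ((u / r) ^ 2 + 1) := by
      rw [← hr2, show u ^ 2 + r ^ 2 = r ^ 2 * ((u / r) ^ 2 + 1) by field_simp,
        Real.sqrt_mul (by positivity), Real.sqrt_sq hrp.le]
    have hQ : ∀ θ : ℝ, |u + Real.sqrt (u ^ 2 + t / 4) * Real.sin (2 * θ)| = r * |Qf (u / r) θ| := by
      intro θ
      rw [← abs_of_pos hrp, ← abs_mul, abs_of_pos hrp, hsq, Qf]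
      congr 1
      field_simp
    have hI : ∀ w : ℂ, (2 : ℂ) ^ w * ((t : ℝ) : ℂ) ^ (-(w / 2)) *
        (∫ θ in (0:ℝ)..Real.pi,
            ((|u + Real.sqrt (u ^ 2 + t / 4) * Real.sin (2 * θ)| : ℝ) : ℂ) ^ w) =
        ∫ θ in (0:ℝ)..Real.pi, ((|Qf (u / r) θ| : ℝ) : ℂ) ^ w := by
      intro w
      have h2 : ∀ θ : ℝ, ((|u + Real.sqrt (u ^ 2 + t / 4) * Real.sin (2 * θ)| : ℝ) : ℂ) ^ w =
          (r : ℂ) ^ w * ((|Qf (u / r) θ| : ℝ) : ℂ) ^ w := by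
        intro θ
        rw [hQ, Complex.ofReal_mul, Complex.mul_cpow_ofReal_nonneg hrp.le (abs_nonneg _)]
      simp_rw [h2]
      rw [intervalIntegral.integral_const_mul, ← mul_assoc]
      have h3 : (2 : ℂ) ^ w * ((t : ℝ) : ℂ) ^ (-(w / 2)) * (r : ℂ) ^ w = 1 := by
        have e1 : (2 : ℂ) ^ w * (r : ℂ) ^ w = ((Real.sqrt t : ℝ) : ℂ) ^ w := by
          rw [show (2 : ℂ) = ((2 : ℝ) : ℂ) by norm_num,
            ← Complex.mul_cpow_ofReal_nonneg (by norm_num) hrp.le, ← Complex.ofReal_mul]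
          congr 2
          rw [hr]; ring
        have e2 : ((t : ℝ) : ℂ) ^ (w / 2) = ((Real.sqrt t : ℝ) : ℂ) ^ w := by
          conv_lhs => rw [← Real.mul_self_sqrt ht.le]
          rw [Complex.ofReal_mul, Complex.mul_cpow_ofReal_nonneg hst.le hst.le,
            ← Complex.cpow_add _ _ (by exact_mod_cast hst.ne')]
          congr 1; ring
        rw [Complex.cpow_neg, e2, mul_right_comm, e1]
        apply mul_inv_cancel₀
        rw [Ne, Complex.cpow_eq_zero_iff]
        intro h
        exact hst.ne' (by exact_mod_cast h.1)
      rw [h3, one_mul]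
    have hm := main_eq (u / r) h0 h1
    have h4 : Complex.sin ((Real.pi : ℂ) * (1 - s) / 2) = Complex.cos (Real.pi * s / 2) := by
      rw [← Complex.sin_pi_div_two_sub]; congr 1; ring
    rw [h4, mul_assoc, mul_assoc, mul_assoc, mul_assoc]
    have i1 := hI (s - 1)
    have i2 := hI (1 - s - 1)
    rw [mul_assoc] at i1 i2
    rw [i1, i2, hm, show 1 - s - 1 = -s by ring]
end

section
/- Let f₁, f₂ : ℝ³ → ℂ be Schwartz functions and let s₁, s₂, w ∈ ℂ with Re(s₁) > 1, Re(s₂) > 1, Re(w) > 2, and fix a sign ± . Then ∫_{(0,∞)³×ℝ²} (μ²t²)^{s₁} (μ²s²)^{s₂} μ^{4w} f₁(ρ(g₁)·x_{±}) f₂(ρ(g₂)·x_{±}) du dv (dt/t³)(ds/s³)(dμ/μ) = 4^{−(w + s₂/2 + 1)} ∫_{D±} ∫₀^∞ ∫_ℝ x₁^{s₁−1} |x₂² − 4x₁x₃|^{w + s₂/2 − 1} τ^{2s₂} f₁(x₁,x₂,x₃) f₂( ρ(a_τ n_ν) · (½√|x₂²−4x₁x₃|) · x_{±} ) dν (dτ/τ³)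 dx₁dx₂dx₃, where g₁ = μ·[[t,0],[u/t,1/t]], g₂ = μ·[[s,0],[v/s,1/s]], a_τ n_ν = [[τ,0],[ν/τ,1/τ]], x₊ = (1,0,−1), x₋ = (1,0,1), D₊ = {x ∈ ℝ³ : x₁ > 0, x₂² − 4x₁x₃ > 0}, D₋ = {x ∈ ℝ³ : x₁ > 0, x₂² − 4x₁x₃ < 0}, and ½√|x₂²−4x₁x₃| · x_{±} denotes scalar multiplication in ℝ³. -/
open MeasureTheory

noncomputable section

/-- Integration domain of the left-hand side: `μ, t, s ∈ (0,∞)`, `u, v ∈ ℝ`. -/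
def LHSdom : Set Param :=
  Set.Ioi 0 ×ˢ Set.Ioi 0 ×ˢ Set.Ioi 0 ×ˢ (Set.univ : Set (ℝ × ℝ))

/-- Integration domain of the right-hand side: `x ∈ D_ε`, `τ ∈ (0,∞)`, `ν ∈ ℝ`. -/
def RHSdom (ε : ℝ) : Set ((ℝ × ℝ × ℝ) × ℝ × ℝ) :=
  {x : ℝ × ℝ × ℝ | 0 < x.1 ∧ 0 < ε * (x.2.1 ^ 2 - 4 * x.1 * x.2.2)} ×ˢ
    Set.Ioi (0 : ℝ) ×ˢ (Set.univ : Set ℝ)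

/-- The orbit map `(μ, t, u) ↦ ρ(g₁) x_ε` in coordinates. -/
def orbMap (ε : ℝ) (p : ℝ × ℝ × ℝ) : ℝ × ℝ × ℝ :=
  (p.1 ^ 2 * p.2.1 ^ 2, 2 * p.1 ^ 2 * p.2.2, (p.2.2 ^ 2 - ε) * p.1 ^ 2 * (p.2.1 ^ 2)⁻¹)

/-- Coordinates on `ℝ × ℝ × ℝ`. -/
def coordEquiv : (Fin 3 → ℝ) ≃ₗ[ℝ] (ℝ × ℝ × ℝ) where
  toFun x := (x 0, x 1, x 2)
  invFun y := ![y.1, y.2.1, y.2.2]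
  map_add' _ _ := rfl
  map_smul' _ _ := rfl
  left_inv x := by ext i; fin_cases i <;> rfl
  right_inv _ := rfl

/-- The Jacobian matrix of the orbit map. -/
def orbMat (ε : ℝ) (p : ℝ × ℝ × ℝ) : Matrix (Fin 3) (Fin 3) ℝ :=
  !![2 * p.1 * p.2.1 ^ 2, 2 * p.1 ^ 2 * p.2.1, 0;
     4 * p.1 * p.2.2, 0, 2 * p.1 ^ 2;
     2 * p.1 * (p.2.2 ^ 2 - ε) * (p.2.1 ^ 2)⁻¹, -2 * (p.2.2 ^ 2 - ε) * p.1 ^ 2 * (p.2.1 ^ 3)⁻¹,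
      2 * p.2.2 * p.1 ^ 2 * (p.2.1 ^ 2)⁻¹]

/-- The derivative of the orbit map. -/
def orbDeriv (ε : ℝ) (p : ℝ × ℝ × ℝ) : (ℝ × ℝ × ℝ) →L[ℝ] (ℝ × ℝ × ℝ) :=
  LinearMap.toContinuousLinearMap
    ((coordEquiv : (Fin 3 → ℝ) →ₗ[ℝ] (ℝ × ℝ × ℝ)) ∘ₗ Matrix.toLin' (orbMat ε p) ∘ₗ
      (coordEquiv.symm : (ℝ × ℝ × ℝ) →ₗ[ℝ] (Fin 3 → ℝ)))

lemma orbDeriv_det (ε : ℝ) (p : ℝ × ℝ × ℝ) (ht : 0 < p.2.1) :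
    LinearMap.det (orbDeriv ε p : (ℝ × ℝ × ℝ) →ₗ[ℝ] (ℝ × ℝ × ℝ)) =
      -16 * ε * p.1 ^ 5 * p.2.1⁻¹ := by
  have : (orbDeriv ε p : (ℝ × ℝ × ℝ) →ₗ[ℝ] (ℝ × ℝ × ℝ)) =
    ((coordEquiv : (Fin 3 → ℝ) →ₗ[ℝ] (ℝ × ℝ × ℝ)) ∘ₗ Matrix.toLin' (orbMat ε p) ∘ₗ
      (coordEquiv.symm : (ℝ × ℝ × ℝ) →ₗ[ℝ] (Fin 3 → ℝ))) := rfl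
  rw [this, LinearMap.det_conj, LinearMap.det_toLin', orbMat, Matrix.det_fin_three]
  simp
  field_simp
  ring

lemma orbDeriv_apply (ε : ℝ) (p q : ℝ × ℝ × ℝ) :
    orbDeriv ε p q =
     (2 * p.1 * p.2.1 ^ 2 * q.1 + 2 * p.1 ^ 2 * p.2.1 * q.2.1,
      4 * p.1 * p.2.2 * q.1 + 2 * p.1 ^ 2 * q.2.2,
      2 * p.1 * (p.2.2 ^ 2 - ε) * (p.2.1 ^ 2)⁻¹ * q.1 +
      -2 * (p.2.2 ^ 2 - ε) * p.1 ^ 2 * (p.2.1 ^ 3)⁻¹ * q.2.1 +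
      2 * p.2.2 * p.1 ^ 2 * (p.2.1 ^ 2)⁻¹ * q.2.2) := by
  have hq : coordEquiv.symm q = ![q.1, q.2.1, q.2.2] := rfl
  have hc : ∀ x : Fin 3 → ℝ, coordEquiv x = (x 0, x 1, x 2) := fun _ => rfl
  simp [orbDeriv, hq, hc, orbMat]
  refine ⟨by ring, by ring, by ring⟩

lemma orbMap_hasFDerivAt (ε : ℝ) (p : ℝ × ℝ × ℝ) (ht : 0 < p.2.1) :
    HasFDerivAt (orbMap ε) (orbDeriv ε p) p := by
  have h1 : HasFDerivAt (fun p : ℝ × ℝ × ℝ => p.1) (ContinuousLinearMap.fst ℝ ℝ (ℝ × ℝ)) p :=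
    hasFDerivAt_fst
  have h2 : HasFDerivAt (fun p : ℝ × ℝ × ℝ => p.2.1)
      ((ContinuousLinearMap.fst ℝ ℝ ℝ).comp (ContinuousLinearMap.snd ℝ ℝ (ℝ × ℝ))) p :=
    hasFDerivAt_fst.comp p hasFDerivAt_snd
  have h3 : HasFDerivAt (fun p : ℝ × ℝ × ℝ => p.2.2)
      ((ContinuousLinearMap.snd ℝ ℝ ℝ).comp (ContinuousLinearMap.snd ℝ ℝ (ℝ × ℝ))) p :=
    hasFDerivAt_snd.comp p hasFDerivAt_snd
  have hi : HasFDerivAt (fun p : ℝ × ℝ × ℝ => (p.2.1 ^ 2)⁻¹) _ p :=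
    (hasDerivAt_inv (pow_ne_zero 2 ht.ne')).comp_hasFDerivAt p (h2.pow 2)
  have H := ((h1.pow 2).mul (h2.pow 2)).prodMk
    ((((h1.pow 2).const_mul 2).mul h3).prodMk ((((h3.pow 2).sub_const ε).mul (h1.pow 2)).mul hi))
  refine HasFDerivAt.congr_fderiv H ?_
  refine ContinuousLinearMap.ext fun q => ?_
  rw [orbDeriv_apply]
  refine Prod.ext ?_ (Prod.ext ?_ ?_)
  · simp; ring
  · simp; ring
  · simp; field_simp; ring

lemma orbMap_disc (ε : ℝ) (p : ℝ × ℝ × ℝ) (ht : 0 < p.2.1) :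
    (orbMap ε p).2.1 ^ 2 - 4 * (orbMap ε p).1 * (orbMap ε p).2.2 = 4 * ε * p.1 ^ 4 := by
  simp only [orbMap]
  field_simp
  ring

/-- Regrouping of the parameters. -/
def regroup : Param ≃ᵐ (ℝ × ℝ × ℝ) × ℝ × ℝ where
  toFun p := ((p.1, p.2.1, p.2.2.2.1), (p.2.2.1, p.2.2.2.2))
  invFun q := (q.1.1, q.1.2.1, q.2.1, q.1.2.2, q.2.2)
  left_inv _ := rfl
  right_inv _ := rfl
  measurable_toFun := by
    show Measurable fun p : Param =>
      (((p.1, p.2.1, p.2.2.2.1), (p.2.2.1, p.2.2.2.2)) : (ℝ × ℝ × ℝ) × ℝ × ℝ)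
    fun_prop
  measurable_invFun := by
    show Measurable fun q : (ℝ × ℝ × ℝ) × ℝ × ℝ =>
      ((q.1.1, q.1.2.1, q.2.1, q.1.2.2, q.2.2) : Param)
    fun_prop

lemma mp_assoc (α β γ : Type) [MeasureSpace α] [MeasureSpace β] [MeasureSpace γ]
    [SFinite (volume : Measure α)] [SFinite (volume : Measure β)] [SFinite (volume : Measure γ)] :
    MeasurePreserving (MeasurableEquiv.prodAssoc : (α × β) × γ ≃ᵐ α × β × γ) :=
  ⟨MeasurableEquiv.prodAssoc.measurable, Measure.prodAssoc_prod⟩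

lemma regroup_mp : MeasurePreserving regroup := by
  have a1 := (mp_assoc ℝ ℝ ℝ).symm
  have a2 : MeasurePreserving (Prod.map Prod.swap id : (ℝ × ℝ) × ℝ → (ℝ × ℝ) × ℝ) :=
    (Measure.measurePreserving_swap (μ := (volume : Measure ℝ)) (ν := (volume : Measure ℝ))).prod
      (MeasurePreserving.id volume)
  have a3 : MeasurePreserving (fun p : ℝ × ℝ × ℝ => (p.2.1, p.1, p.2.2)) :=
    (mp_assoc ℝ ℝ ℝ).comp (a2.comp a1)
  have a4 : MeasurePreserving (fun p : ℝ × ℝ × ℝ × ℝ => ((p.1, p.2.2.1), (p.2.1, p.2.2.2))) :=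
    ((mp_assoc ℝ ℝ (ℝ × ℝ)).symm).comp ((MeasurePreserving.id volume).prod a3)
  exact ((mp_assoc ℝ (ℝ × ℝ) (ℝ × ℝ)).symm).comp ((MeasurePreserving.id volume).prod a4)

/-- Regrouped parameter domain. -/
def midDom : Set ((ℝ × ℝ × ℝ) × ℝ × ℝ) :=
  (Set.Ioi 0 ×ˢ Set.Ioi 0 ×ˢ Set.univ) ×ˢ Set.Ioi (0 : ℝ) ×ˢ (Set.univ : Set ℝ)

lemma regroup_preimage : regroup ⁻¹' midDom = LHSdom := by
  ext p
  simp [regroup, midDom, LHSdom, and_assoc]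

lemma orb_image (ε : ℝ) (hε : ε = 1 ∨ ε = -1) :
    Prod.map (orbMap ε) (id : ℝ × ℝ → ℝ × ℝ) '' midDom = RHSdom ε := by
  have hε2 : ε * ε = 1 := by rcases hε with rfl | rfl <;> norm_num
  rw [midDom, RHSdom, Set.prodMap_image_prod, Set.image_id]
  congr 1
  ext x
  constructor
  · rintro ⟨p, ⟨hm, ht, -⟩, rfl⟩
    simp only [Set.mem_Ioi] at hm ht
    refine ⟨by simp only [orbMap]; positivity, ?_⟩
    rw [orbMap_disc ε p ht]
    have : ε * (4 * ε * p.1 ^ 4) = 4 * p.1 ^ 4 := by linear_combination 4 * p.1 ^ 4 * hε2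
    rw [this]; positivity
  · rintro ⟨hx, hd⟩
    obtain ⟨m, hm, hm4⟩ : ∃ m : ℝ, 0 < m ∧ 4 * m ^ 4 = ε * (x.2.1 ^ 2 - 4 * x.1 * x.2.2) := by
      have h0 : 0 < ε * (x.2.1 ^ 2 - 4 * x.1 * x.2.2) / 4 := by positivity
      refine ⟨√(√(ε * (x.2.1 ^ 2 - 4 * x.1 * x.2.2) / 4)), by positivity, ?_⟩
      rw [show ∀ y : ℝ, y ^ 4 = (y ^ 2) ^ 2 from fun y => by ring, Real.sq_sqrt (by positivity),
        Real.sq_sqrt h0.le]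
      ring
    have hs : √x.1 ^ 2 = x.1 := Real.sq_sqrt hx.le
    refine ⟨(m, √x.1 / m, x.2.1 / (2 * m ^ 2)), ⟨hm, ?_, trivial⟩, ?_⟩
    · simp only [Set.mem_Ioi]; positivity
    · refine Prod.ext ?_ (Prod.ext ?_ ?_)
      · simp only [orbMap]; rw [div_pow, hs]; field_simp
      · simp only [orbMap]; field_simp
      · simp only [orbMap]; rw [div_pow (√x.1), hs]; field_simp
        have : x.2.1 ^ 2 - 4 * x.1 * x.2.2 = 4 * ε * m ^ 4 := by
          linear_combination -ε * hm4 - (x.2.1 ^ 2 - 4 * x.1 * x.2.2) * hε2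
        linear_combination this

lemma orb_injOn (ε : ℝ) (hε : ε = 1 ∨ ε = -1) :
    Set.InjOn (Prod.map (orbMap ε) (id : ℝ × ℝ → ℝ × ℝ)) midDom := by
  have hε0 : ε ≠ 0 := by rcases hε with rfl | rfl <;> norm_num
  rintro ⟨p, z⟩ ⟨⟨hm, ht, -⟩, -⟩ ⟨q, z'⟩ ⟨⟨hm', ht', -⟩, -⟩ h
  simp only [Set.mem_Ioi] at hm ht hm' ht'
  simp only [Prod.map_apply, id, Prod.mk.injEq] at h
  obtain ⟨h, rfl⟩ := h
  have hd := orbMap_disc ε p ht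
  rw [h, orbMap_disc ε q ht'] at hd
  have e1 : p.1 = q.1 := by
    have : q.1 ^ 4 = p.1 ^ 4 := by
      apply mul_left_cancel₀ (mul_ne_zero four_ne_zero hε0); exact hd
    exact ((pow_left_inj₀ hm'.le hm.le (by norm_num)).1 this).symm
  have a1 : p.1 ^ 2 * p.2.1 ^ 2 = q.1 ^ 2 * q.2.1 ^ 2 := congrArg Prod.fst h
  have a2 : 2 * p.1 ^ 2 * p.2.2 = 2 * q.1 ^ 2 * q.2.2 := congrArg (fun x => x.2.1) h
  rw [← e1] at a1 a2
  have e2 : p.2.1 = q.2.1 :=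
    (pow_left_inj₀ ht.le ht'.le two_ne_zero).1 (mul_left_cancel₀ (by positivity) a1)
  have e3 : p.2.2 = q.2.2 := mul_left_cancel₀ (by positivity) a2
  exact Prod.ext (Prod.ext e1 (Prod.ext e2 e3)) rfl

lemma exp_cpow (x : ℝ) (z : ℂ) : ((Real.exp x : ℝ) : ℂ) ^ z = Complex.exp (x * z) := by
  rw [Complex.cpow_def_of_ne_zero (by exact_mod_cast (Real.exp_pos x).ne'), ← Complex.ofReal_log
    (Real.exp_pos x).le, Real.log_exp]

lemma weight_eq (s₁ s₂ w : ℂ) (m t s : ℝ) (hm : 0 < m) (ht : 0 < t) (hs : 0 < s) :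
    ((m ^ 2 * t ^ 2 : ℝ) : ℂ) ^ s₁ * ((m ^ 2 * s ^ 2 : ℝ) : ℂ) ^ s₂ * (m : ℂ) ^ (4 * w) *
      (((t ^ 3 * s ^ 3 * m)⁻¹ : ℝ) : ℂ) =
    (4 : ℂ) ^ (-(w + s₂ / 2 + 1)) * ((16 * m ^ 5 * t⁻¹ : ℝ) : ℂ) *
      (((m ^ 2 * t ^ 2 : ℝ) : ℂ) ^ (s₁ - 1) * ((4 * m ^ 4 : ℝ) : ℂ) ^ (w + s₂ / 2 - 1) *
        (s : ℂ) ^ (2 * s₂) * (((s ^ 3)⁻¹ : ℝ) : ℂ)) := by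
  obtain ⟨a, rfl⟩ : ∃ a, Real.exp a = m := ⟨_, Real.exp_log hm⟩
  obtain ⟨b, rfl⟩ : ∃ b, Real.exp b = t := ⟨_, Real.exp_log ht⟩
  obtain ⟨c, rfl⟩ : ∃ c, Real.exp c = s := ⟨_, Real.exp_log hs⟩
  obtain ⟨l, hl⟩ : ∃ l, Real.exp l = 4 := ⟨_, Real.exp_log (by norm_num)⟩
  have h4 : (4 : ℂ) = ((Real.exp l : ℝ) : ℂ) := by rw [hl]; norm_num
  have h16 : (16 : ℝ) = Real.exp l ^ 2 := by rw [hl]; norm_num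
  have hw4 : (4 : ℂ) * w = 2 * (2 * w) := by ring
  rw [hw4, h4, h16, ← hl]
  simp only [← Real.exp_nat_mul, ← Real.exp_add, ← Real.exp_neg, exp_cpow]
  simp only [Complex.ofReal_exp, ← Complex.exp_add]
  congr 1
  push_cast
  ring

lemma change_vars (ε : ℝ) (hε : ε = 1 ∨ ε = -1) (g : (ℝ × ℝ × ℝ) × ℝ × ℝ → ℂ) :
    ∫ q in RHSdom ε, g q = ∫ p in LHSdom,
      ((16 * p.1 ^ 5 * p.2.1⁻¹ : ℝ) : ℂ) *
        g (orbMap ε (p.1, p.2.1, p.2.2.2.1), (p.2.2.1, p.2.2.2.2)) := by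
  have hεa : |ε| = 1 := by rcases hε with rfl | rfl <;> norm_num
  have hmeas : MeasurableSet midDom :=
    (measurableSet_Ioi.prod (measurableSet_Ioi.prod MeasurableSet.univ)).prod
      (measurableSet_Ioi.prod MeasurableSet.univ)
  have hder : ∀ q ∈ midDom, HasFDerivWithinAt (Prod.map (orbMap ε) (id : ℝ × ℝ → ℝ × ℝ))
      ((orbDeriv ε q.1).prodMap (ContinuousLinearMap.id ℝ (ℝ × ℝ))) midDom q := fun q hq =>
    (HasFDerivAt.prodMap q (orbMap_hasFDerivAt ε q.1 hq.1.2.1)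
      (hasFDerivAt_id q.2)).hasFDerivWithinAt
  have i2 : (volume : Measure (ℝ × ℝ)).IsAddHaarMeasure :=
    Measure.prod.instIsAddHaarMeasure volume volume
  have i3 : (volume : Measure (ℝ × ℝ × ℝ)).IsAddHaarMeasure :=
    Measure.prod.instIsAddHaarMeasure volume volume
  have i5 : (volume : Measure ((ℝ × ℝ × ℝ) × ℝ × ℝ)).IsAddHaarMeasure :=
    Measure.prod.instIsAddHaarMeasure volume volume
  rw [← orb_image ε hε, integral_image_eq_integral_abs_det_fderiv_smul volume hmeas hder
    (orb_injOn ε hε), ← regroup_preimage,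
    ← regroup_mp.setIntegral_preimage_emb regroup.measurableEmbedding]
  refine setIntegral_congr_fun (regroup.measurable hmeas) ?_
  rintro ⟨m, t, s, u, v⟩ ⟨⟨hm, ht, -⟩, hs, -⟩
  have hm : 0 < m := hm
  have ht : 0 < t := ht
  have hr : regroup (m, t, s, u, v) = ((m, t, u), (s, v)) := rfl
  have hdet : |((orbDeriv ε (m, t, u)).prodMap (ContinuousLinearMap.id ℝ (ℝ × ℝ))).det| =
      16 * m ^ 5 * t⁻¹ := by
    rw [ContinuousLinearMap.det, ContinuousLinearMap.coe_prodMap, LinearMap.det_prodMap,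
      orbDeriv_det ε _ ht]
    simp only [ContinuousLinearMap.coe_id, LinearMap.det_id, mul_one]
    rw [abs_mul, abs_mul, abs_mul, hεa, abs_of_pos (by positivity : 0 < m ^ 5),
      abs_of_pos (by positivity : 0 < t⁻¹)]
    norm_num
  simp only [hr, Prod.map_apply, id, hdet, Complex.real_smul]

theorem stmt19 (f₁ f₂ : SchwartzMap (ℝ × ℝ × ℝ) ℂ) (s₁ s₂ w : ℂ)
    (h1 : 1 < s₁.re) (h2 : 1 < s₂.re) (hw : 2 < w.re)
    (ε : ℝ) (hε : ε = 1 ∨ ε = -1) :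
    (∫ p in LHSdom,
        ((p.1 ^ 2 * p.2.1 ^ 2 : ℝ) : ℂ) ^ s₁ * ((p.1 ^ 2 * p.2.2.1 ^ 2 : ℝ) : ℂ) ^ s₂ *
          ((p.1 : ℝ) : ℂ) ^ (4 * w) *
          f₁ (rhoAct (p.1 * p.2.1) (p.1 * p.2.2.2.1 / p.2.1) (p.1 / p.2.1)
                (1, 0, -ε)) *
          f₂ (rhoAct (p.1 * p.2.2.1) (p.1 * p.2.2.2.2 / p.2.2.1) (p.1 / p.2.2.1)
                (1, 0, -ε)) *
          (((p.2.1 ^ 3 * p.2.2.1 ^ 3 * p.1)⁻¹ : ℝ) : ℂ))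
      = (4 : ℂ) ^ (-(w + s₂ / 2 + 1)) *
        ∫ q in RHSdom ε,
          ((q.1.1 : ℝ) : ℂ) ^ (s₁ - 1) *
            ((|q.1.2.1 ^ 2 - 4 * q.1.1 * q.1.2.2| : ℝ) : ℂ) ^ (w + s₂ / 2 - 1) *
            ((q.2.1 : ℝ) : ℂ) ^ (2 * s₂) *
            f₁ q.1 *
            f₂ (rhoAct q.2.1 (q.2.2 / q.2.1) q.2.1⁻¹
                  ((Real.sqrt |q.1.2.1 ^ 2 - 4 * q.1.1 * q.1.2.2| / 2) •
                    ((1 : ℝ), (0 : ℝ), (-ε : ℝ)))) *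
            (((q.2.1 ^ 3)⁻¹ : ℝ) : ℂ) := by
  have hεa : |ε| = 1 := by rcases hε with rfl | rfl <;> norm_num
  have hmeas : MeasurableSet LHSdom :=
    measurableSet_Ioi.prod (measurableSet_Ioi.prod (measurableSet_Ioi.prod MeasurableSet.univ))
  rw [change_vars ε hε, ← integral_const_mul]
  refine setIntegral_congr_fun hmeas ?_
  rintro ⟨m, t, s, u, v⟩ ⟨hm, ht, hs, -⟩
  have hm : 0 < m := hm
  have ht : 0 < t := ht
  have hs : 0 < s := hs
  have hdisc := orbMap_disc ε (m, t, u) ht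
  have habs : |4 * ε * m ^ 4| = 4 * m ^ 4 := by
    rw [abs_mul, abs_mul, hεa, abs_of_pos (by positivity : 0 < m ^ 4)]; norm_num
  have hsq : √(4 * m ^ 4) / 2 = m ^ 2 := by
    rw [show 4 * m ^ 4 = (2 * m ^ 2) ^ 2 by ring, Real.sqrt_sq (by positivity)]; ring
  have hg1 : rhoAct (m * t) (m * u / t) (m / t) (1, 0, -ε) = orbMap ε (m, t, u) := by
    refine Prod.ext ?_ (Prod.ext ?_ ?_) <;> simp only [rhoAct, orbMap] <;> field_simp <;> ring
  have hg2 : rhoAct (m * s) (m * v / s) (m / s) (1, 0, -ε) =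
      rhoAct s (v / s) s⁻¹ (m ^ 2 • ((1 : ℝ), (0 : ℝ), (-ε : ℝ))) := by
    refine Prod.ext ?_ (Prod.ext ?_ ?_) <;>
      simp only [rhoAct, Prod.smul_mk, smul_eq_mul] <;> field_simp <;> ring
  have hfst : (orbMap ε (m, t, u)).1 = m ^ 2 * t ^ 2 := rfl
  simp only [hdisc, habs, hsq, hg1, hg2]
  rw [hfst]
  have hW := weight_eq s₁ s₂ w m t s hm ht hs
  linear_combination (f₁ (orbMap ε (m, t, u)) *
    f₂ (rhoAct s (v / s) s⁻¹ (m ^ 2 • ((1 : ℝ), (0 : ℝ), (-ε : ℝ))))) * hW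
end
end
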